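/- arXiv:1708.07788 — 3 statements merged into one kernel-verified Lean document; each statement's English description precedes it below -/
import Mathlib

section
/- Let A be an n×n real symmetric matrix, Q an n×k real matrix, q_{k+1} ∈ ℝⁿ, β_{k+1} ∈ ℝ, E an n×k real matrix, and T a k×k real symmetric tridiagonal matrix such that A·Q = Q·T + β_{k+1}·q_{k+1}·e_kᵀ + E. Let η > 0 and suppose every eigenvalue of T lies in [λmin(A) − η, λmax(A) + η]. Set q₁ = Q·e₁. Then for every real polynomial p of degree less than k and every C ≥ 0 such that |p(y)| ≤ C for all y ∈ [λmin(A) − η, λmax(A) + η], one has ‖Q·p(T)·e₁ − p(A)·q₁‖ ≤ (2Ck³/η)·‖E‖. -/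
/-! Change variables affinely so that the interval `[λmin(A) - η, λmax(A) + η]` becomes `[-1, 1]`;
this scales `E` by `δ = 2 / (λmax(A) - λmin(A) + 2η) ≤ 1 / η`. For the Chebyshev polynomials `T_i`
with `i < k`, the residual `T_i(A) q₁ - Q T_i(T) e₁` obeys the three-term Chebyshev recurrence with
forcing terms `2 δ E T_j(T) e₁`: the rank-one term of the Lanczos relation drops out because `T` is
tridiagonal, so the last coordinate of `T_j(T) e₁` vanishes for `j < k - 1`. Solving the recurrence
(`chebyshev_residual_eq`) expresses the residual as a sum of `U_{i-1-j}(A)` applied to the forcing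
terms. All eigenvalues lie in `[-1, 1]`, where `|T_j| ≤ 1` and `|U_m| ≤ m + 1`, so the residual has
norm at most `i (i + 1) δ ‖E‖ ≤ k² δ ‖E‖`.

A polynomial of degree less than `k` bounded by `C` on `[-1, 1]` is a combination of `T_0, …,
T_{k-1}` with coefficients at most `2 C` in absolute value (`exists_chebyshev_expansion`). Summing
the `k` residuals gives the bound `2 C k³ δ ‖E‖`.
-/

open Matrix Polynomial Set

/-- Euclidean norm of a vector in `ℝⁿ`. -/
noncomputable def vecNorm {n : ℕ} (v : Fin n → ℝ) : ℝ :=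
  Real.sqrt (∑ i, v i ^ 2)

/-- Spectral (operator) norm of a real matrix. -/
noncomputable def matNorm {m n : ℕ} (A : Matrix (Fin m) (Fin n) ℝ) : ℝ :=
  sSup {c : ℝ | ∃ v : Fin n → ℝ, vecNorm v ≤ 1 ∧ c = vecNorm (A.mulVec v)}

/-- Largest eigenvalue of a square real matrix. -/
noncomputable def lmax {n : ℕ} (A : Matrix (Fin n) (Fin n) ℝ) : ℝ :=
  sSup {μ : ℝ | ∃ v : Fin n → ℝ, v ≠ 0 ∧ A.mulVec v = μ • v}

/-- Smallest eigenvalue of a square real matrix. -/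
noncomputable def lmin {n : ℕ} (A : Matrix (Fin n) (Fin n) ℝ) : ℝ :=
  sInf {μ : ℝ | ∃ v : Fin n → ℝ, v ≠ 0 ∧ A.mulVec v = μ • v}

/-- A matrix is tridiagonal if `T i j = 0` whenever `|i - j| > 1`. -/
def IsTridiagonal {k : ℕ} (T : Matrix (Fin k) (Fin k) ℝ) : Prop :=
  ∀ i j : Fin k, 1 < |(i : ℤ) - (j : ℤ)| → T i j = 0

/-- The matrix function `f(A)` of a real symmetric matrix, defined through the
eigendecomposition `A = V Λ Vᵀ` as `V f(Λ) Vᵀ`. -/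
noncomputable def matFun {n : ℕ} {A : Matrix (Fin n) (Fin n) ℝ} (hA : A.IsHermitian)
    (f : ℝ → ℝ) : Matrix (Fin n) (Fin n) ℝ :=
  (hA.eigenvectorUnitary : Matrix (Fin n) (Fin n) ℝ) * Matrix.diagonal (f ∘ hA.eigenvalues) *
    star (hA.eigenvectorUnitary : Matrix (Fin n) (Fin n) ℝ)

/-- The `i`-th Chebyshev polynomial of the first kind, shifted and stretched to the range
`[lmin A - η, lmax A + η]`: with `r_max = lmax A + η`, `r_min = lmin A - η` and
`δ = 2 / (r_max - r_min)`, this is `y ↦ T_i (δ (y - r_min) - 1)`. -/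
noncomputable def shiftedCheb {n : ℕ} (A : Matrix (Fin n) (Fin n) ℝ) (η : ℝ) (i : ℕ) :
    Polynomial ℝ :=
  (Polynomial.Chebyshev.T ℝ i).comp
    (Polynomial.C (2 / ((lmax A + η) - (lmin A - η))) *
      (Polynomial.X - Polynomial.C (lmin A - η)) - 1)


lemma two_mulVec_aux {n : ℕ} (v : Fin n → ℝ) :
    (2 : Matrix (Fin n) (Fin n) ℝ) *ᵥ v = (2 : ℝ) • v := by
  rw [← one_add_one_eq_two, Matrix.add_mulVec, Matrix.one_mulVec, two_smul]

/-! ### Chebyshev polynomials -/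

lemma abs_eval_U_le (m : ℕ) {y : ℝ} (hy : |y| ≤ 1) :
    |(Chebyshev.U ℝ (m : ℤ)).eval y| ≤ m + 1 := by
  induction m with
  | zero => simp
  | succ m ih =>
    push_cast
    rw [Chebyshev.U_eq_X_mul_U_add_T]
    have hT := Chebyshev.abs_eval_T_real_le_one ((m : ℤ) + 1) hy
    simp only [eval_add, eval_mul, eval_X]
    refine (abs_add_le _ _).trans ?_
    rw [abs_mul]
    have : |y| * |(Chebyshev.U ℝ (m : ℤ)).eval y| ≤ 1 * (m + 1) := by gcongr
    linarith

/-- The Chebyshev coefficients of a polynomial bounded by `C` on `[-1, 1]` are at most `2 * C`,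
by orthogonality for the weight `1 / √(1 - x²)` of total mass `π`. -/
lemma exists_chebyshev_expansion {k : ℕ} {p : ℝ[X]} (hdeg : p.natDegree < k) {C : ℝ}
    (hp : ∀ y ∈ Icc (-1 : ℝ) 1, |p.eval y| ≤ C) :
    ∃ c : ℕ → ℝ, p = ∑ i ∈ Finset.range k, c i • Chebyshev.T ℝ (i : ℤ) ∧ ∀ i < k, |c i| ≤ 2 * C := by
  let S : Sequence ℝ := ⟨fun i => Chebyshev.T ℝ (i : ℤ), fun i => by simp⟩
  have hmem : p ∈ Submodule.span ℝ (S '' Set.Iio k) := by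
    rw [S.span_degreeLT (fun i _ => by simp [S.ne_zero i])]
    exact mem_degreeLT.2 (degree_le_natDegree.trans_lt (by exact_mod_cast hdeg))
  rw [← Finset.coe_Iio, Submodule.mem_span_image_finset_iff_exists_fun'] at hmem
  obtain ⟨c, hc⟩ := hmem
  have hpe : p = ∑ i ∈ Finset.range k, c i • Chebyshev.T ℝ (i : ℤ) := by
    rw [← hc, Nat.Iio_eq_range]
  have hC : 0 ≤ C := (abs_nonneg _).trans (hp 0 (by norm_num))
  refine ⟨c, hpe, fun i hi => ?_⟩
  have hint : ∀ q : ℝ[X], MeasureTheory.Integrable (fun x => q.eval x) Chebyshev.measureT :=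
    fun q => Chebyshev.integrable_measureT q.continuous.continuousOn
  have hcoef : ∫ x, (p * Chebyshev.T ℝ (i : ℤ)).eval x ∂Chebyshev.measureT
      = c i * ∫ x, (Chebyshev.T ℝ (i : ℤ)).eval x * (Chebyshev.T ℝ (i : ℤ)).eval x
          ∂Chebyshev.measureT := by
    conv_lhs => rw [hpe]
    simp_rw [Finset.sum_mul, eval_finsetSum]
    rw [MeasureTheory.integral_finsetSum _ (fun j _ => hint _),
      Finset.sum_eq_single_of_mem i (Finset.mem_range.2 hi)]
    · simp_rw [smul_mul_assoc, eval_smul, eval_mul, smul_eq_mul]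
      rw [MeasureTheory.integral_const_mul]
    · intro j _ hji
      simp_rw [smul_mul_assoc, eval_smul, eval_mul, smul_eq_mul]
      rw [MeasureTheory.integral_const_mul,
        Chebyshev.integral_eval_T_real_mul_eval_T_real_measureT_of_ne hji, mul_zero]
  have hbound : |∫ x, (p * Chebyshev.T ℝ (i : ℤ)).eval x ∂Chebyshev.measureT| ≤ C * Real.pi := by
    rw [Chebyshev.integral_measureT_eq_integral_cos]
    have := intervalIntegral.norm_integral_le_of_norm_le_const (a := 0) (b := Real.pi) (C := C)
      (f := fun θ => (p * Chebyshev.T ℝ (i : ℤ)).eval (Real.cos θ)) (fun θ _ => by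
        rw [eval_mul, norm_mul, Real.norm_eq_abs, Real.norm_eq_abs]
        have h1 := hp (Real.cos θ) (Real.cos_mem_Icc θ)
        have h2 := Chebyshev.abs_eval_T_real_le_one (i : ℤ) (Real.abs_cos_le_one θ)
        calc _ ≤ C * 1 := by gcongr
          _ = C := mul_one C)
    simpa [abs_of_pos Real.pi_pos] using this
  have hnorm : Real.pi / 2 ≤ ∫ x, (Chebyshev.T ℝ (i : ℤ)).eval x * (Chebyshev.T ℝ (i : ℤ)).eval x
          ∂Chebyshev.measureT := by
    rcases eq_or_ne i 0 with rfl | hi0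
    · have := Chebyshev.integral_eval_T_real_mul_self_measureT_zero
      rw [Nat.cast_zero, this]
      linarith [Real.pi_pos]
    · exact (Chebyshev.integral_T_real_mul_self_measureT_of_ne_zero hi0).ge
  rw [hcoef, abs_mul] at hbound
  have h1 := hnorm.trans (le_abs_self _)
  have h2 := (mul_le_mul_of_nonneg_left h1 (abs_nonneg (c i))).trans hbound
  nlinarith [Real.pi_pos]

/-! ### Norm estimates -/

lemma vecNorm_eq_norm {n : ℕ} (v : Fin n → ℝ) : vecNorm v = ‖WithLp.toLp 2 v‖ := by
  simp [vecNorm, EuclideanSpace.norm_eq]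

lemma vecNorm_nonneg {n : ℕ} (v : Fin n → ℝ) : 0 ≤ vecNorm v := Real.sqrt_nonneg _

lemma vecNorm_smul {n : ℕ} (c : ℝ) (v : Fin n → ℝ) : vecNorm (c • v) = |c| * vecNorm v := by
  simp [vecNorm_eq_norm, norm_smul]

lemma vecNorm_neg {n : ℕ} (v : Fin n → ℝ) : vecNorm (-v) = vecNorm v := by
  simp [vecNorm]

lemma vecNorm_sum_le {n : ℕ} {ι : Type*} (s : Finset ι) (f : ι → Fin n → ℝ) :
    vecNorm (∑ i ∈ s, f i) ≤ ∑ i ∈ s, vecNorm (f i) := by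
  simp only [vecNorm_eq_norm, WithLp.toLp_sum]
  exact norm_sum_le _ _

open scoped Matrix.Norms.L2Operator in
lemma vecNorm_mulVec_le_l2 {m n : ℕ} (A : Matrix (Fin m) (Fin n) ℝ) (v : Fin n → ℝ) :
    vecNorm (A *ᵥ v) ≤ ‖A‖ * vecNorm v := by
  simp only [vecNorm_eq_norm]
  exact A.l2_opNorm_mulVec (WithLp.toLp 2 v)

/-- Uses that the set whose supremum is `matNorm A` is bounded above, by the `L²` operator norm of
`A`. -/
lemma vecNorm_mulVec_le_matNorm {m n : ℕ} (A : Matrix (Fin m) (Fin n) ℝ) {v : Fin n → ℝ}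
    (hv : vecNorm v ≤ 1) : vecNorm (A *ᵥ v) ≤ matNorm A := by
  open scoped Matrix.Norms.L2Operator in
  refine le_csSup ⟨‖A‖, ?_⟩ ⟨v, hv, rfl⟩
  rintro _ ⟨w, hw, rfl⟩
  exact (vecNorm_mulVec_le_l2 A w).trans (mul_le_of_le_one_right (norm_nonneg _) hw)

lemma matNorm_nonneg {m n : ℕ} (A : Matrix (Fin m) (Fin n) ℝ) : 0 ≤ matNorm A :=
  (vecNorm_nonneg _).trans (vecNorm_mulVec_le_matNorm A (v := 0) (by simp [vecNorm]))

lemma exists_eigenvector_of_mem_spectrum {n : ℕ} {M : Matrix (Fin n) (Fin n) ℝ}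
    (hM : M.IsHermitian) {μ : ℝ} (hμ : μ ∈ spectrum ℝ M) :
    ∃ v : Fin n → ℝ, v ≠ 0 ∧ M *ᵥ v = μ • v := by
  rw [hM.spectrum_real_eq_range_eigenvalues] at hμ
  obtain ⟨i, rfl⟩ := hμ
  refine ⟨hM.eigenvectorBasis i, fun h => ?_, hM.mulVec_eigenvectorBasis i⟩
  exact hM.eigenvectorBasis.orthonormal.ne_zero i (by ext j; exact congrFun h j)

open scoped Matrix.Norms.L2Operator in
/-- Spectral estimate: for symmetric `M`, `‖q(M)‖` is at most the maximum of `|q|` over any set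
containing the eigenvalues. -/
lemma vecNorm_aeval_mulVec_le {n : ℕ} {M : Matrix (Fin n) (Fin n) ℝ} (hM : M.IsHermitian)
    {s : Set ℝ} (hs : ∀ (μ : ℝ) (v : Fin n → ℝ), v ≠ 0 → M *ᵥ v = μ • v → μ ∈ s)
    {q : ℝ[X]} {B : ℝ} (hB : 0 ≤ B) (hq : ∀ y ∈ s, |q.eval y| ≤ B) (v : Fin n → ℝ) :
    vecNorm (aeval M q *ᵥ v) ≤ B * vecNorm v := by
  refine (vecNorm_mulVec_le_l2 _ v).trans
    (mul_le_mul_of_nonneg_right ?_ (vecNorm_nonneg v))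
  rw [← cfc_polynomial q M hM.isSelfAdjoint]
  refine norm_cfc_le hB fun x hx => ?_
  obtain ⟨w, hw, hMw⟩ := exists_eigenvector_of_mem_spectrum hM hx
  exact hq x (hs x w hw hMw)

lemma bounded_eigenvalues {n : ℕ} (M : Matrix (Fin n) (Fin n) ℝ) :
    ∃ B : ℝ, ∀ (μ : ℝ) (v : Fin n → ℝ), v ≠ 0 → M *ᵥ v = μ • v → |μ| ≤ B := by
  open scoped Matrix.Norms.L2Operator in
  refine ⟨‖M‖, fun μ v hv h => ?_⟩
  have h1 := vecNorm_mulVec_le_l2 M v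
  rw [h, vecNorm_smul] at h1
  have h0 : 0 < vecNorm v := by
    rw [vecNorm_eq_norm, norm_pos_iff]
    simpa using hv
  exact le_of_mul_le_mul_right h1 h0

lemma eigenvalue_mem_Icc {n : ℕ} (M : Matrix (Fin n) (Fin n) ℝ) {μ : ℝ} {v : Fin n → ℝ}
    (hv : v ≠ 0) (h : M *ᵥ v = μ • v) : μ ∈ Icc (lmin M) (lmax M) := by
  obtain ⟨B, hB⟩ := bounded_eigenvalues M
  constructor
  · refine csInf_le ⟨-B, ?_⟩ ⟨v, hv, h⟩
    rintro _ ⟨w, hw, hMw⟩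
    exact (abs_le.1 (hB _ w hw hMw)).1
  · refine le_csSup ⟨B, ?_⟩ ⟨v, hv, h⟩
    rintro _ ⟨w, hw, hMw⟩
    exact (abs_le.1 (hB _ w hw hMw)).2

/-- If `M` has no eigenvector (`n = 0`), both sides are `0`. -/
lemma lmin_le_lmax {n : ℕ} (M : Matrix (Fin n) (Fin n) ℝ) : lmin M ≤ lmax M := by
  by_cases h : ∃ (μ : ℝ) (v : Fin n → ℝ), v ≠ 0 ∧ M *ᵥ v = μ • v
  · obtain ⟨μ, v, hv, h⟩ := h
    have := eigenvalue_mem_Icc M hv h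
    exact this.1.trans this.2
  · have he : {μ : ℝ | ∃ v : Fin n → ℝ, v ≠ 0 ∧ M *ᵥ v = μ • v} = ∅ := by
      ext μ
      simpa using fun v hv hM => h ⟨μ, v, hv, hM⟩
    simp [lmin, lmax, he]

/-! ### The Chebyshev residual of the Lanczos relation -/

/-- A tridiagonal matrix moves the support of a vector by at most one index, so `T ^ m e₁` is
supported on the first `m + 1` coordinates. -/
lemma IsTridiagonal.pow_mulVec_apply_eq_zero {k : ℕ} (hk : 0 < k) {T : Matrix (Fin k) (Fin k) ℝ}
    (hT : IsTridiagonal T) (m : ℕ) (j : Fin k) (hj : m < (j : ℕ)) :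
    ((T ^ m) *ᵥ Pi.single (⟨0, hk⟩ : Fin k) 1) j = 0 := by
  induction m generalizing j with
  | zero =>
    have : j ≠ ⟨0, hk⟩ := fun h => by simp [h] at hj
    simp [this]
  | succ m ih =>
    rw [pow_succ', ← Matrix.mulVec_mulVec, Matrix.mulVec, dotProduct]
    refine Finset.sum_eq_zero fun l _ => ?_
    by_cases hl : m < (l : ℕ)
    · rw [ih l hl, mul_zero]
    · rw [hT j l (by rw [lt_abs]; left; omega), zero_mul]

lemma IsTridiagonal.aeval_mulVec_apply_eq_zero {k : ℕ} (hk : 0 < k)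
    {T : Matrix (Fin k) (Fin k) ℝ} (hT : IsTridiagonal T) (q : ℝ[X]) (j : Fin k)
    (hj : q.natDegree < (j : ℕ)) :
    (aeval T q *ᵥ Pi.single (⟨0, hk⟩ : Fin k) 1) j = 0 := by
  rw [aeval_eq_sum_range, Matrix.sum_mulVec, Finset.sum_apply]
  refine Finset.sum_eq_zero fun i hi => ?_
  rw [Matrix.smul_mulVec, Pi.smul_apply,
    hT.pow_mulVec_apply_eq_zero hk i j (by have := Finset.mem_range.1 hi; omega), smul_zero]

/-- The residual `T_i(A) Q e - Q T_i(T) e` satisfies the Chebyshev recurrence with forcing terms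
`2 E T_j(T) e` (halved for `j = 0`); solving it by variation of constants brings in the second-kind polynomials `U`. -/
lemma chebyshev_residual_eq {n k : ℕ} {A : Matrix (Fin n) (Fin n) ℝ} {Q E : Matrix (Fin n) (Fin k) ℝ}
    {T : Matrix (Fin k) (Fin k) ℝ} {e : Fin k → ℝ}
    (h : ∀ i : ℕ, i + 1 < k → A *ᵥ (Q *ᵥ (aeval T (Chebyshev.T ℝ (i : ℤ)) *ᵥ e)) =
      Q *ᵥ (T *ᵥ (aeval T (Chebyshev.T ℝ (i : ℤ)) *ᵥ e)) +
        E *ᵥ (aeval T (Chebyshev.T ℝ (i : ℤ)) *ᵥ e)) (i : ℕ) (hi : i < k) :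
    aeval A (Chebyshev.T ℝ (i : ℤ)) *ᵥ (Q *ᵥ e) - Q *ᵥ (aeval T (Chebyshev.T ℝ (i : ℤ)) *ᵥ e) =
      ∑ j ∈ Finset.range i, aeval A (Chebyshev.U ℝ ((i : ℤ) - 1 - j)) *ᵥ
        ((if j = 0 then 1 else 2 : ℝ) • E *ᵥ (aeval T (Chebyshev.T ℝ (j : ℤ)) *ᵥ e)) := by
  induction i using Nat.twoStepInduction with
  | zero => simp
  | one =>
    have := h 0 hi
    simp only [Nat.cast_zero, Chebyshev.T_zero, map_one, Matrix.one_mulVec] at this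
    simp [this]
  | more i ih0 ih1 =>
    have h0 := ih0 (by omega)
    have h1 := ih1 (by omega)
    have hr := h (i + 1) hi
    have hrec : ∀ (l : ℕ) (M : Matrix (Fin l) (Fin l) ℝ) (v : Fin l → ℝ),
        aeval M (Chebyshev.T ℝ ((i + 2 : ℕ) : ℤ)) *ᵥ v =
        (2 : ℝ) • M *ᵥ (aeval M (Chebyshev.T ℝ ((i + 1 : ℕ) : ℤ)) *ᵥ v)
          - aeval M (Chebyshev.T ℝ (i : ℤ)) *ᵥ v := by
      intro l M v
      push_cast
      rw [Chebyshev.T_add_two, map_sub, Matrix.sub_mulVec, map_mul, map_mul, aeval_X,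
        map_ofNat, ← Matrix.mulVec_mulVec, ← Matrix.mulVec_mulVec, two_mulVec_aux]
    have hU : ∀ (j : ℤ) (v : Fin n → ℝ),
        aeval A (Chebyshev.U ℝ (((i + 2 : ℕ) : ℤ) - 1 - j)) *ᵥ v =
        (2 : ℝ) • A *ᵥ (aeval A (Chebyshev.U ℝ (((i + 1 : ℕ) : ℤ) - 1 - j)) *ᵥ v)
          - aeval A (Chebyshev.U ℝ ((i : ℤ) - 1 - j)) *ᵥ v := by
      intro j v
      rw [Chebyshev.U_eq, map_sub, Matrix.sub_mulVec, map_mul, map_mul, aeval_X,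
        map_ofNat, ← Matrix.mulVec_mulVec, ← Matrix.mulVec_mulVec, two_mulVec_aux]
      push_cast
      ring_nf
    set w := aeval T (Chebyshev.T ℝ ((i + 1 : ℕ) : ℤ)) *ᵥ e with hw
    -- The extra summand `j = i` vanishes because `U_{-1} = 0`.
    have hsum : ∑ j ∈ Finset.range (i + 1), aeval A (Chebyshev.U ℝ ((i : ℤ) - 1 - j)) *ᵥ
        ((if j = 0 then 1 else 2 : ℝ) • E *ᵥ (aeval T (Chebyshev.T ℝ (j : ℤ)) *ᵥ e)) =
        ∑ j ∈ Finset.range i, aeval A (Chebyshev.U ℝ ((i : ℤ) - 1 - j)) *ᵥ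
        ((if j = 0 then 1 else 2 : ℝ) • E *ᵥ (aeval T (Chebyshev.T ℝ (j : ℤ)) *ᵥ e)) := by
      rw [Finset.sum_range_succ]
      simp
    have hlast : (((i + 2 : ℕ) : ℤ) - 1 - ((i + 1 : ℕ) : ℤ)) = 0 := by push_cast; ring
    rw [Finset.sum_range_succ, hlast, Chebyshev.U_zero, map_one, Matrix.one_mulVec,
      if_neg (by omega)]
    simp_rw [hU]
    rw [Finset.sum_sub_distrib, hsum, ← h0, ← Finset.smul_sum, ← Matrix.mulVec_sum, ← h1, hrec,
      hrec, ← hw,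
      Matrix.mulVec_sub, Matrix.mulVec_sub, hr, Matrix.mulVec_smul]
    module

/-- The theorem after the affine change of variables to the reference interval `[-1, 1]`. -/
lemma lanczos_reference_interval {n k : ℕ} {A : Matrix (Fin n) (Fin n) ℝ}
    {Q E : Matrix (Fin n) (Fin k) ℝ} {T : Matrix (Fin k) (Fin k) ℝ} {e : Fin k → ℝ} {δ : ℝ}
    (hδ : 0 ≤ δ)
    (hA : ∀ (q : ℝ[X]) (B : ℝ), 0 ≤ B → (∀ y ∈ Icc (-1 : ℝ) 1, |q.eval y| ≤ B) →
      ∀ v, vecNorm (aeval A q *ᵥ v) ≤ B * vecNorm v)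
    (hT : ∀ (q : ℝ[X]) (B : ℝ), 0 ≤ B → (∀ y ∈ Icc (-1 : ℝ) 1, |q.eval y| ≤ B) →
      ∀ v, vecNorm (aeval T q *ᵥ v) ≤ B * vecNorm v)
    (he : vecNorm e ≤ 1)
    (h : ∀ i : ℕ, i + 1 < k → A *ᵥ (Q *ᵥ (aeval T (Chebyshev.T ℝ (i : ℤ)) *ᵥ e)) =
      Q *ᵥ (T *ᵥ (aeval T (Chebyshev.T ℝ (i : ℤ)) *ᵥ e)) +
        (δ • E) *ᵥ (aeval T (Chebyshev.T ℝ (i : ℤ)) *ᵥ e))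
    {p : ℝ[X]} (hdeg : p.natDegree < k) {C : ℝ} (hC : 0 ≤ C)
    (hp : ∀ y ∈ Icc (-1 : ℝ) 1, |p.eval y| ≤ C) :
    vecNorm (Q *ᵥ (aeval T p *ᵥ e) - aeval A p *ᵥ (Q *ᵥ e)) ≤
      2 * C * (k : ℝ) ^ 3 * δ * matNorm E := by
  have hE := matNorm_nonneg E
  have hw : ∀ j : ℕ, vecNorm ((δ • E) *ᵥ (aeval T (Chebyshev.T ℝ (j : ℤ)) *ᵥ e)) ≤
      δ * matNorm E := by
    intro j
    rw [Matrix.smul_mulVec, vecNorm_smul, abs_of_nonneg hδ]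
    refine mul_le_mul_of_nonneg_left (vecNorm_mulVec_le_matNorm E ?_) hδ
    refine (hT _ 1 zero_le_one (fun y hy =>
      Chebyshev.abs_eval_T_real_le_one (j : ℤ) (abs_le.2 hy)) e).trans ?_
    linarith
  have hres : ∀ i < k, vecNorm (aeval A (Chebyshev.T ℝ (i : ℤ)) *ᵥ (Q *ᵥ e) -
      Q *ᵥ (aeval T (Chebyshev.T ℝ (i : ℤ)) *ᵥ e)) ≤ (k : ℝ) ^ 2 * (δ * matNorm E) := by
    intro i hi
    rw [chebyshev_residual_eq h i hi]
    refine (vecNorm_sum_le _ _).trans ?_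
    have hterm : ∀ j ∈ Finset.range i, vecNorm (aeval A (Chebyshev.U ℝ ((i : ℤ) - 1 - j)) *ᵥ
        ((if j = 0 then 1 else 2 : ℝ) • (δ • E) *ᵥ (aeval T (Chebyshev.T ℝ (j : ℤ)) *ᵥ e))) ≤
        2 * (((i - 1 - j : ℕ) : ℝ) + 1) * (δ * matNorm E) := by
      intro j hj
      have hj' := Finset.mem_range.1 hj
      have hcast : (i : ℤ) - 1 - j = ((i - 1 - j : ℕ) : ℤ) := by omega
      rw [hcast]
      refine (hA _ (((i - 1 - j : ℕ) : ℝ) + 1) (by positivity)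
        (fun y hy => abs_eval_U_le _ (abs_le.2 hy)) _).trans ?_
      rw [vecNorm_smul]
      have h2 : |(if j = 0 then 1 else 2 : ℝ)| ≤ 2 := by split_ifs <;> norm_num
      calc _ ≤ (((i - 1 - j : ℕ) : ℝ) + 1) * (2 * (δ * matNorm E)) := by
            exact mul_le_mul_of_nonneg_left
              (mul_le_mul h2 (hw j) (vecNorm_nonneg _) zero_le_two) (by positivity)
        _ = _ := by ring
    refine (Finset.sum_le_sum hterm).trans ?_
    rw [← Finset.sum_mul, Finset.sum_range_reflect (fun j : ℕ => 2 * ((j : ℝ) + 1)) i]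
    have hgauss : ∀ m : ℕ, ∑ j ∈ Finset.range m, 2 * ((j : ℝ) + 1) = m * (m + 1) := by
      intro m
      induction m with
      | zero => simp
      | succ m ih => rw [Finset.sum_range_succ, ih]; push_cast; ring
    rw [hgauss]
    have hik : (i : ℝ) + 1 ≤ k := by exact_mod_cast hi
    have hi0 : (0 : ℝ) ≤ i := i.cast_nonneg
    refine mul_le_mul_of_nonneg_right ?_ (mul_nonneg hδ hE)
    nlinarith
  obtain ⟨c, hpc, hc⟩ := exists_chebyshev_expansion hdeg hp
  have hexp : Q *ᵥ (aeval T p *ᵥ e) - aeval A p *ᵥ (Q *ᵥ e) =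
      -∑ i ∈ Finset.range k, c i • (aeval A (Chebyshev.T ℝ (i : ℤ)) *ᵥ (Q *ᵥ e) -
        Q *ᵥ (aeval T (Chebyshev.T ℝ (i : ℤ)) *ᵥ e)) := by
    rw [hpc]
    simp only [map_sum, map_smul, Matrix.sum_mulVec, Matrix.mulVec_sum, Matrix.smul_mulVec,
      Matrix.mulVec_smul, smul_sub, Finset.sum_sub_distrib]
    abel
  rw [hexp, vecNorm_neg]
  refine (vecNorm_sum_le _ _).trans ?_
  calc _ ≤ ∑ i ∈ Finset.range k, 2 * C * ((k : ℝ) ^ 2 * (δ * matNorm E)) := by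
        refine Finset.sum_le_sum fun i hi => ?_
        have hi' := Finset.mem_range.1 hi
        rw [vecNorm_smul]
        exact mul_le_mul (hc i hi') (hres i hi') (vecNorm_nonneg _) (by positivity)
    _ = _ := by
        rw [Finset.sum_const, Finset.card_range, nsmul_eq_mul]
        ring

/-- Finite-precision Lanczos applies bounded polynomials stably: with perturbed
Lanczos relation `A Q = Q T + β q_{k+1} e_kᵀ + E`, all eigenvalues of `T` in
`[λmin(A) - η, λmax(A) + η]`, and `|p| ≤ C` on that interval for a polynomial `p` of degree
`< k`, we have `‖Q·p(T)·e₁ - p(A)·q₁‖ ≤ (2 C k³ / η)·‖E‖`. -/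
theorem lanczos_applies_bounded_polynomials
    {n k : ℕ} (hk : 0 < k)
    (A : Matrix (Fin n) (Fin n) ℝ) (Q : Matrix (Fin n) (Fin k) ℝ)
    (qk1 : Fin n → ℝ) (β : ℝ) (E : Matrix (Fin n) (Fin k) ℝ) (T : Matrix (Fin k) (Fin k) ℝ)
    (hA : A.IsHermitian) (hT : T.IsHermitian) (hTtri : IsTridiagonal T)
    (hrel : A * Q = Q * T +
      β • Matrix.vecMulVec qk1 (Pi.single (⟨k - 1, Nat.sub_lt hk Nat.one_pos⟩ : Fin k) 1) + E)
    (η : ℝ) (hη : 0 < η)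
    (hTeig : ∀ (μ : ℝ) (v : Fin k → ℝ), v ≠ 0 → T.mulVec v = μ • v →
      μ ∈ Set.Icc (lmin A - η) (lmax A + η))
    (p : Polynomial ℝ) (hdeg : p.natDegree < k) (C : ℝ) (hC : 0 ≤ C)
    (hpC : ∀ y ∈ Set.Icc (lmin A - η) (lmax A + η), |p.eval y| ≤ C) :
    vecNorm (Q.mulVec ((Polynomial.aeval T p).mulVec (Pi.single (⟨0, hk⟩ : Fin k) 1)) -
        (Polynomial.aeval A p).mulVec (Q.mulVec (Pi.single (⟨0, hk⟩ : Fin k) 1))) ≤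
      2 * C * (k : ℝ) ^ 3 / η * matNorm E := by
  set a := lmin A - η with ha
  set b := lmax A + η with hb
  have hab : 2 * η ≤ b - a := by linarith [lmin_le_lmax A]
  set r := (b - a) / 2 with hr
  have hrη : η ≤ r := by linarith
  have hr0 : 0 < r := by linarith
  -- `L` maps `[a, b]` onto `[-1, 1]` and `Linv` is its inverse.
  set L : ℝ[X] := Polynomial.C r⁻¹ * (X - Polynomial.C ((a + b) / 2)) with hL
  set Linv : ℝ[X] := Polynomial.C r * X + Polynomial.C ((a + b) / 2) with hLinv
  have hLe : ∀ y, L.eval y = r⁻¹ * (y - (a + b) / 2) := by simp [hL]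
  have hLinv_eval : ∀ y, Linv.eval y = r * y + (a + b) / 2 := by simp [hLinv]
  have hLmem : ∀ y ∈ Icc a b, L.eval y ∈ Icc (-1 : ℝ) 1 := by
    intro y hy
    rw [hLe, mem_Icc, ← div_eq_inv_mul, le_div_iff₀ hr0, div_le_iff₀ hr0]
    constructor <;> linarith [hy.1, hy.2]
  have hLinv_mem : ∀ y ∈ Icc (-1 : ℝ) 1, Linv.eval y ∈ Icc a b := by
    intro y hy
    rw [hLinv_eval]
    constructor <;> nlinarith [hy.1, hy.2]
  have hpcomp : p = (p.comp Linv).comp L := by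
    have : Linv.comp L = X := by
      simp only [hLinv, hL, add_comp, mul_comp, C_comp, X_comp]
      rw [← mul_assoc, ← Polynomial.C_mul, mul_inv_cancel₀ hr0.ne']
      simp
    rw [comp_assoc, this, comp_X]
  have hLA : ∀ (l : ℕ) (M : Matrix (Fin l) (Fin l) ℝ),
      aeval M L = r⁻¹ • M - (r⁻¹ * ((a + b) / 2)) • 1 := by
    intro l M
    simp only [hL, map_mul, map_sub, aeval_C, aeval_X, Algebra.algebraMap_eq_smul_one]
    rw [smul_mul_assoc, one_mul, smul_sub, smul_smul]
  have hspec : ∀ {l : ℕ} {M : Matrix (Fin l) (Fin l) ℝ}, M.IsHermitian →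
      (∀ (μ : ℝ) (v : Fin l → ℝ), v ≠ 0 → M *ᵥ v = μ • v → μ ∈ Icc a b) →
      ∀ (q : ℝ[X]) (B : ℝ), 0 ≤ B → (∀ y ∈ Icc (-1 : ℝ) 1, |q.eval y| ≤ B) →
      ∀ v, vecNorm (aeval (aeval M L) q *ᵥ v) ≤ B * vecNorm v := by
    intro l M hM hs q B hB hq v
    rw [← aeval_comp]
    refine vecNorm_aeval_mulVec_le hM hs hB (fun y hy => ?_) v
    rw [eval_comp]
    exact hq _ (hLmem y hy)
  have hAeig : ∀ (μ : ℝ) (v : Fin n → ℝ), v ≠ 0 → A *ᵥ v = μ • v → μ ∈ Icc a b := by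
    intro μ v hv h
    have := eigenvalue_mem_Icc A hv h
    exact ⟨by linarith [this.1], by linarith [this.2]⟩
  have hmain := lanczos_reference_interval (A := aeval A L) (T := aeval T L) (Q := Q) (E := E)
    (e := Pi.single (⟨0, hk⟩ : Fin k) 1) (δ := r⁻¹) (inv_nonneg.2 hr0.le)
    (hspec hA hAeig) (hspec hT hTeig) (by simp [vecNorm, Pi.single_apply]) ?_
    (p := p.comp Linv) (C := C) ?_ hC ?_
  · rw [← aeval_comp, ← aeval_comp, ← hpcomp] at hmain
    refine hmain.trans ?_
    rw [div_eq_mul_inv]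
    have := matNorm_nonneg E
    gcongr
  · intro i hi
    rw [← aeval_comp]
    set w := aeval T ((Chebyshev.T ℝ (i : ℤ)).comp L) *ᵥ Pi.single (⟨0, hk⟩ : Fin k) 1 with hw
    -- By tridiagonality the rank-one term of the Lanczos relation does not see `w`.
    have hlast : w ⟨k - 1, Nat.sub_lt hk Nat.one_pos⟩ = 0 := by
      refine hTtri.aeval_mulVec_apply_eq_zero hk _ _ ?_
      have hdL : L.natDegree ≤ 1 := by
        rw [hL]
        exact (natDegree_C_mul_le _ _).trans (natDegree_X_sub_C_le _)
      have : ((Chebyshev.T ℝ (i : ℤ)).comp L).natDegree ≤ i * 1 := by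
        refine natDegree_comp_le.trans (Nat.mul_le_mul ?_ hdL)
        simp
      simp only
      omega
    have hAQ : A *ᵥ (Q *ᵥ w) = Q *ᵥ (T *ᵥ w) + E *ᵥ w := by
      rw [Matrix.mulVec_mulVec w A Q, hrel, Matrix.add_mulVec, Matrix.add_mulVec, Matrix.smul_mulVec,
        Matrix.vecMulVec_mulVec, single_one_dotProduct, hlast, ← Matrix.mulVec_mulVec w Q T, MulOpposite.op_zero,
        zero_smul, smul_zero, add_zero]
    rw [hLA, hLA]
    simp only [Matrix.sub_mulVec, Matrix.smul_mulVec, Matrix.one_mulVec, Matrix.mulVec_sub,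
      Matrix.mulVec_smul, hAQ]
    module
  · have hdL : Linv.natDegree ≤ 1 := by
      rw [hLinv]
      exact natDegree_linear_le
    have := natDegree_comp_le (p := p) (q := Linv)
    nlinarith
  · intro y hy
    rw [eval_comp]
    exact hpC _ (hLinv_mem y hy)
end

section
/- There exists a constant c with 1/5 ≤ c ≤ 1/2 such that: for every real κ ≥ 2, every real η with 0 < η ≤ 1/(20κ²), and every integer n ≥ ⌊log₂ κ⌋ · ⌈ln(1/η)⌉, there exists an n×n real symmetric positive definite matrix A whose eigenvalues λ₁(A), …, λₙ(A) all lie in [1/κ, 1] (hence its condition number λmax(A)/λmin(A) is at most κ) such that for every natural number k < ⌊κ^c/377⌋ and every real polynomial p of degree less than k, there exists x ∈ ⋃_{i=1}^n [λ_i(A) − η, λ_i(A) + η] with |p(x) − 1/x| ≥ 1/6. -/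
/-!
The constant is `c = 1/5`. Put `L = ⌊log₂ κ⌋` and `N = ⌈ln (1/η)⌉`. The matrix is diagonal, and its
spectrum consists of `N` equally spaced points in each dyadic interval `[2⁻⁽ⁱ⁺¹⁾, 2⁻ⁱ]`, `i < L`
(with `1` repeated to fill up the dimension).

If a polynomial `p` of degree `< k` were within `1/6` of `1/x` on all the `η`-neighbourhoods, then
`q(x) = 1 - x p(x)` would satisfy `q(0) = 1` and `|q| ≤ 1/6` there. Over `ℂ`, `q` is a product of
at most `k` factors `1 - x/r`, and `|1 - x/r| ≥ |1 - x/|r||`, so only the moduli `ρ = |r|` matter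
(`exists_root_moduli`). In each neighbourhood, the pigeonhole principle gives a point at distance
at least `η/(k+1)` from all the moduli (`exists_avoiding`).

Now average `log |q|` over these points, with weight `1.15ⁱ/N` on each point of the `i`-th interval.
For a single modulus `ρ`, the average over one interval `[h, 2h]` is

* at least `-4h/ρ` if `ρ ≥ 4h` (`sum_log_ge_of_far`),
* at least `log (h/ρ) - log 2` if `ρ ≤ h/2` (`sum_log_ge_of_small`),
* always at least `log (h/ρ) - 5.1` (`sum_log_ge`): one point may be very close to `ρ`, but its
  distance to `ρ` is at least `η/(k+1) ≥ η²`, so it costs only `2 log (1/η) ≤ 2N`, which is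
  spread over the `N` points of the interval; the other points are controlled by a factorial.

Summing over `i`, the gain from the intervals to the right of `ρ`, which is of the order of
`(1/log 1.15)²`, beats the loss from the intervals near and to the left of `ρ`. The weighted sum is thus
bounded below by an absolute constant `-200` (`weighted_sum_ge`); the negative bound is only needed
when `ρ` is so large that few intervals lie to its right. Hence the total over the roots is at least
`-200 k`, while it is at most `-1` times the total weight (`log 6 > 1`), and the latter is at least
`1.15^(L-1) ≥ κ^(1/5)/1.15²` because `1.15^5 ≥ 2`. So `k` is at least a constant times `κ^(1/5)`,
which contradicts `k < ⌊κ^(1/5)/377⌋`.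
-/

open Matrix Polynomial Set

/-! ### Moduli of the roots and sample points avoiding them -/

/-- A real polynomial with value `1` at `0` dominates `∏ |1 - x/ρ|` on the positive axis, where `ρ`
runs over the moduli of its complex roots. -/
lemma exists_root_moduli (q : ℝ[X]) (hq : q.eval 0 = 1) :
    ∃ d ≤ q.natDegree, ∃ ρ : Fin d → ℝ, (∀ l, 0 < ρ l) ∧
      ∀ x : ℝ, 0 ≤ x → ∏ l, |1 - x / ρ l| ≤ |q.eval x| := by
  set P : ℂ[X] := q.map (algebraMap ℝ ℂ) with hP
  have hs : P.Splits := IsAlgClosed.splits P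
  have hev : ∀ x : ℝ, ((q.eval x : ℝ) : ℂ) =
      P.leadingCoeff * ∏ i : Fin P.roots.toList.length, ((x : ℂ) - P.roots.toList[i]) := by
    intro x
    have h1 : P.eval (x : ℂ) = ((q.eval x : ℝ) : ℂ) := by
      have := Polynomial.eval_map_apply (f := algebraMap ℝ ℂ) (p := q) x
      simpa [hP] using this
    rw [← h1, hs.eval_eq_prod_roots]
    congr 1
    have h2 := Fin.prod_univ_fun_getElem P.roots.toList (fun r => (x : ℂ) - r)
    rw [← Multiset.prod_coe, ← Multiset.map_coe, Multiset.coe_toList] at h2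
    exact h2.symm
  have h0 := hev 0
  rw [hq] at h0
  have hlc : P.leadingCoeff ≠ 0 := by
    intro h; rw [h] at h0; simp at h0
  have hne : ∀ i : Fin P.roots.toList.length, P.roots.toList[i] ≠ 0 := by
    intro i hi
    rw [Finset.prod_eq_zero (Finset.mem_univ i) (by simp [hi])] at h0
    simp at h0
  refine ⟨P.roots.toList.length, ?_, fun i => ‖P.roots.toList[i]‖, fun i => norm_pos_iff.2 (hne i), ?_⟩
  · rw [Multiset.length_toList]
    exact (Polynomial.card_roots' P).trans (by rw [hP]; exact Polynomial.natDegree_map_le)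
  · intro x hx
    have h2 : ((q.eval x : ℝ) : ℂ) =
        ∏ i : Fin P.roots.toList.length, (1 - (x : ℂ) / P.roots.toList[i]) := by
      have : ∏ i : Fin P.roots.toList.length, ((x : ℂ) - P.roots.toList[i]) =
          (∏ i : Fin P.roots.toList.length, (((0 : ℝ) : ℂ) - P.roots.toList[i])) *
          ∏ i : Fin P.roots.toList.length, (1 - (x : ℂ) / P.roots.toList[i]) := by
        rw [← Finset.prod_mul_distrib]
        refine Finset.prod_congr rfl fun i _ => ?_
        have := hne i
        push_cast
        field_simp
        ring
      rw [hev x, this, ← mul_assoc, ← h0]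
      simp
    have h3 : |q.eval x| = ∏ i : Fin P.roots.toList.length, ‖1 - (x : ℂ) / P.roots.toList[i]‖ := by
      rw [← norm_prod, ← h2, Complex.norm_real, Real.norm_eq_abs]
    rw [h3]
    refine Finset.prod_le_prod (fun _ _ => abs_nonneg _) fun i _ => ?_
    have := abs_norm_sub_norm_le (1 : ℂ) ((x : ℂ) / P.roots.toList[i])
    simpa [abs_of_nonneg hx] using this

/-- Pigeonhole: among `d + 1` points of the interval with spacing `2η/(d+1)`, each `ρ l` is closer
than `η/(d+1)` to at most one. -/
lemma exists_avoiding {d : ℕ} (ρ : Fin d → ℝ) (lam η : ℝ) (hη : 0 < η) :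
    ∃ x ∈ Icc (lam - η) (lam + η), ∀ l, η / (d + 1) ≤ |x - ρ l| := by
  by_contra! hcon
  have hd : (0 : ℝ) < d + 1 := by positivity
  set e : ℝ := η / (d + 1) with he
  have hed : e * (d + 1) = η := by rw [he]; field_simp
  have he0 : 0 < e := by positivity
  have hmem : ∀ t : Fin (d + 1), lam - η + 2 * e * (t : ℕ) ∈ Icc (lam - η) (lam + η) := by
    intro t
    have ht : ((t : ℕ) : ℝ) ≤ d + 1 := by exact_mod_cast t.2.le
    have h1 := mul_le_mul_of_nonneg_left ht he0.le
    have h2 : 0 ≤ e * ((t : ℕ) : ℝ) := by positivity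
    constructor <;> linarith
  choose f hf using fun t : Fin (d + 1) => hcon _ (hmem t)
  obtain ⟨s, t, hst, hfst⟩ := Fintype.exists_ne_map_eq_of_card_lt f (by simp)
  wlog hlt : s < t generalizing s t
  · exact this t s hst.symm hfst.symm (lt_of_le_of_ne (not_lt.1 hlt) hst.symm)
  have h1 := abs_lt.1 (hf s)
  have h2 := abs_lt.1 (hf t)
  rw [hfst] at h1
  have h3 : ((s : ℕ) : ℝ) + 1 ≤ (t : ℕ) := by exact_mod_cast hlt
  have h4 := mul_le_mul_of_nonneg_left h3 he0.le
  linarith [h1.1, h2.2]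

/-! ### One modulus against one dyadic interval -/

/-- A one-sided lower bound for `log (c! / (4N)^c)`, from `(N/2)^c / c! ≤ exp (N/2)`. -/
lemma sum_log_div_ge (c N : ℕ) (hN : 0 < N) :
    -(c * Real.log 8) - N / 2 ≤ ∑ i ∈ Finset.range c, Real.log (((i : ℝ) + 1) / (4 * N)) := by
  have hN' : (0 : ℝ) < N := by exact_mod_cast hN
  rw [← Real.log_prod (fun i _ => by positivity), Finset.prod_div_distrib, Finset.prod_const,
    Finset.card_range]
  have hf : ∏ i ∈ Finset.range c, ((i : ℝ) + 1) = c.factorial := by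
    rw [← Finset.prod_range_add_one_eq_factorial]; push_cast; rfl
  rw [hf]
  have hcf : (0 : ℝ) < c.factorial := by exact_mod_cast c.factorial_pos
  have h := Real.pow_div_factorial_le_exp (N / 2 : ℝ) (by positivity) c
  rw [div_le_iff₀ hcf] at h
  have h2 := Real.log_le_log (by positivity) h
  rw [Real.log_mul (Real.exp_pos _).ne' hcf.ne', Real.log_exp, Real.log_pow] at h2
  rw [Real.log_div hcf.ne' (by positivity), Real.log_pow]
  have h3 : Real.log (4 * N) = Real.log 8 + Real.log (N / 2) := by
    rw [← Real.log_mul (by norm_num) (by positivity)]; congr 1; ring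
  rw [h3]; linarith

lemma log_eight : Real.log 8 = 3 * Real.log 2 := by
  rw [show (8 : ℝ) = 2 ^ 3 by norm_num, Real.log_pow]; norm_num

/-- If the `y j` are at least the distances, in units of `4N`, from the index `a`, then all terms
`log (y j)` with `j ≠ a` sum to at least `-(log 8 + 1) N`; the exceptional term costs at most `2N`. -/
lemma bucket_near (N a : ℕ) (ha : a < N) (y : ℕ → ℝ)
    (hy : ∀ j < N, j ≠ a → |(j : ℝ) - a| / (4 * N) ≤ y j)
    (hs : ∀ j < N, Real.exp (-(2 * N)) ≤ y j) :
    -(5.1 * N) ≤ ∑ j ∈ Finset.range N, Real.log (y j) := by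
  obtain ⟨c, rfl⟩ : ∃ c, N = a + 1 + c := ⟨N - (a + 1), by omega⟩
  have hN : 0 < a + 1 + c := by omega
  have hN' : (0 : ℝ) < ((a + 1 + c : ℕ) : ℝ) := by exact_mod_cast hN
  rw [Finset.sum_range_add, Finset.sum_range_succ]
  have h1 : -(a * Real.log 8) - ((a + 1 + c : ℕ) : ℝ) / 2 ≤
      ∑ j ∈ Finset.range a, Real.log (y j) := by
    refine (sum_log_div_ge a _ hN).trans ?_
    rw [← Finset.sum_range_reflect]
    refine Finset.sum_le_sum fun j hj => Real.log_le_log (by positivity) ?_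
    have hj := Finset.mem_range.1 hj
    refine le_trans (le_of_eq ?_) (hy j (by omega) (by omega))
    have : ((a - 1 - j : ℕ) : ℝ) + 1 = a - j := by
      rw [Nat.sub_sub, Nat.cast_sub (by omega)]; push_cast; ring
    rw [this, abs_sub_comm, abs_of_nonneg]
    have : (j : ℝ) < a := by exact_mod_cast hj
    linarith
  have h2 : -(c * Real.log 8) - ((a + 1 + c : ℕ) : ℝ) / 2 ≤
      ∑ j ∈ Finset.range c, Real.log (y (a + 1 + j)) := by
    refine (sum_log_div_ge c _ hN).trans ?_
    refine Finset.sum_le_sum fun j hj => Real.log_le_log (by positivity) ?_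
    have hj := Finset.mem_range.1 hj
    refine le_trans (le_of_eq ?_) (hy (a + 1 + j) (by omega) (by omega))
    rw [abs_of_nonneg] <;> push_cast
    · ring
    · linarith [(Nat.cast_nonneg j : (0 : ℝ) ≤ j)]
  have h3 : -(2 * ((a + 1 + c : ℕ) : ℝ)) ≤ Real.log (y a) := by
    rw [Real.le_log_iff_exp_le ((Real.exp_pos _).trans_le (hs a ha))]; exact hs a ha
  rw [log_eight] at h1 h2
  have := Real.log_two_lt_d9
  push_cast at *
  nlinarith [(Nat.cast_nonneg a : (0 : ℝ) ≤ a), (Nat.cast_nonneg c : (0 : ℝ) ≤ c)]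

/-- Points in the middle halves of the cells `[j, j+1]`, `j < N`: if `a` is the index of the cell of
`u`, clamped to `[0, N-1]`, all points outside cell `a` stay away from `u`. -/
lemma exists_nearest_cell (N : ℕ) (hN : 0 < N) (θ : ℕ → ℝ)
    (hθ : ∀ j < N, 1 / 4 ≤ θ j ∧ θ j ≤ 3 / 4) (u : ℝ) :
    ∃ a < N, ∀ j < N, j ≠ a → |(j : ℝ) - a| / 4 ≤ |j + θ j - u| := by
  have key : ∀ a : ℕ, (∀ j < N, j < a → (a : ℝ) ≤ u) → (∀ j < N, a < j → u ≤ a + 1) →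
      ∀ j < N, j ≠ a → |(j : ℝ) - a| / 4 ≤ |j + θ j - u| := by
    intro a h1 h2 j hj hja
    have hθ := hθ j hj
    rcases lt_or_gt_of_ne hja with h | h
    · have := h1 j hj h
      have h' : (j : ℝ) + 1 ≤ a := by exact_mod_cast h
      rw [abs_sub_comm, abs_sub_comm _ u, abs_of_nonneg, abs_of_nonneg] <;> linarith
    · have := h2 j hj h
      have h' : (a : ℝ) + 1 ≤ j := by exact_mod_cast h
      rw [abs_of_nonneg, abs_of_nonneg] <;> linarith
  rcases lt_or_ge u 0 with hu | hu
  · exact ⟨0, hN, key 0 (fun j _ h => by omega) (fun j _ _ => by push_cast; linarith)⟩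
  rcases lt_or_ge u N with hu' | hu'
  · exact ⟨⌊u⌋₊, (Nat.floor_lt hu).2 hu', key _ (fun _ _ _ => Nat.floor_le hu)
      (fun _ _ _ => (Nat.lt_floor_add_one u).le)⟩
  · refine ⟨N - 1, by omega, key _ (fun j _ h => le_trans ?_ hu') (fun j hj h => by omega)⟩
    exact_mod_cast Nat.sub_le N 1

/-- An interval `[h, 2h]` far to the left of `ρ` contributes little. -/
lemma sum_log_ge_of_far {N : ℕ} {h ρ : ℝ} {x : ℕ → ℝ} (hρ : 0 < ρ)
    (hx : ∀ j < N, 0 ≤ x j ∧ x j ≤ 2 * h) (hh : 4 * h ≤ ρ) :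
    N * -(4 * h / ρ) ≤ ∑ j ∈ Finset.range N, Real.log |1 - x j / ρ| := by
  rw [← nsmul_eq_mul]
  refine le_of_eq_of_le (by rw [Finset.card_range]) (Finset.card_nsmul_le_sum _ _ _ fun j hj => ?_)
  obtain ⟨h0, h1⟩ := hx j (Finset.mem_range.1 hj)
  have ht0 : 0 ≤ x j / ρ := by positivity
  have ht : x j / ρ ≤ 1 / 2 := by rw [div_le_iff₀ hρ]; linarith
  have ht2 : 2 * (x j / ρ) ≤ 4 * h / ρ := by
    rw [← mul_div_assoc]; exact div_le_div_of_nonneg_right (by linarith) hρ.le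
  rw [abs_of_nonneg (by linarith)]
  have h3 := Real.one_sub_inv_le_log_of_pos (x := 1 - x j / ρ) (by linarith)
  have h4 : (1 - x j / ρ)⁻¹ ≤ 1 + 2 * (x j / ρ) := by
    rw [inv_le_iff_one_le_mul₀ (by linarith)]
    nlinarith
  linarith

/-- An interval `[h, 2h]` to the right of `ρ` contributes a nonnegative amount. -/
lemma sum_log_ge_of_small {N : ℕ} {h ρ : ℝ} {x : ℕ → ℝ} (hρ : 0 < ρ)
    (hx : ∀ j < N, h ≤ x j) (hh : 2 * ρ ≤ h) :
    N * (Real.log (h / ρ) - Real.log 2) ≤ ∑ j ∈ Finset.range N, Real.log |1 - x j / ρ| := by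
  rw [← nsmul_eq_mul]
  refine le_of_eq_of_le (by rw [Finset.card_range]) (Finset.card_nsmul_le_sum _ _ _ fun j hj => ?_)
  have h1 := hx j (Finset.mem_range.1 hj)
  have hh0 : 0 < h := by linarith
  rw [← Real.log_div (by positivity) (by norm_num)]
  refine Real.log_le_log (by positivity) ?_
  have h2 : h / ρ ≤ x j / ρ := by gcongr
  have h3 : 2 ≤ h / ρ := by rw [le_div_iff₀ hρ]; exact hh
  rw [abs_sub_comm, abs_of_nonneg (by linarith)]
  linarith

/-- The bound without any assumption on the position of `ρ` relative to `[h, 2h]`, used when `ρ` and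
`h` are comparable. -/
lemma sum_log_ge {N : ℕ} (hN : 0 < N) {h ρ : ℝ} {x : ℕ → ℝ} (hρ : 0 < ρ) (hh : 0 < h)
    (hx : ∀ j < N, h * (1 + (j + 1 / 4) / N) ≤ x j ∧ x j ≤ h * (1 + (j + 3 / 4) / N))
    (hs : ∀ j < N, Real.exp (-(2 * N)) * h ≤ |x j - ρ|) :
    N * (Real.log (h / ρ) - 5.1) ≤ ∑ j ∈ Finset.range N, Real.log |1 - x j / ρ| := by
  have hN' : (0 : ℝ) < N := by exact_mod_cast hN
  have hθ : ∀ j < N, 1 / 4 ≤ N * (x j / h - 1) - j ∧ N * (x j / h - 1) - j ≤ 3 / 4 := by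
    intro j hj
    obtain ⟨h1, h2⟩ := hx j hj
    have h3 : 1 + (j + 1 / 4 : ℝ) / N ≤ x j / h := by rw [le_div_iff₀ hh]; linarith
    have h4 : x j / h ≤ 1 + (j + 3 / 4 : ℝ) / N := by rw [div_le_iff₀ hh]; linarith
    have h5 : (j + 1 / 4 : ℝ) / N ≤ x j / h - 1 := by linarith
    have h6 : x j / h - 1 ≤ (j + 3 / 4 : ℝ) / N := by linarith
    rw [div_le_iff₀ hN'] at h5
    rw [le_div_iff₀ hN'] at h6
    constructor <;> linarith
  obtain ⟨a, ha, hclose⟩ := exists_nearest_cell N hN (fun j => N * (x j / h - 1) - j) hθ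
    (N * (ρ / h - 1))
  have hy := bucket_near N a ha (fun j => |x j - ρ| / h) ?_ ?_
  · have hsum : ∑ j ∈ Finset.range N, Real.log |1 - x j / ρ| =
        ∑ j ∈ Finset.range N, (Real.log (h / ρ) + Real.log (|x j - ρ| / h)) := by
      refine Finset.sum_congr rfl fun j hj => ?_
      have hpos : 0 < |x j - ρ| := lt_of_lt_of_le (by positivity) (hs j (Finset.mem_range.1 hj))
      rw [← Real.log_mul (by positivity) (by positivity)]
      congr 1
      have : 1 - x j / ρ = (ρ - x j) / ρ := by field_simp
      rw [this, abs_div, abs_of_pos hρ, abs_sub_comm]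
      field_simp
    rw [hsum, Finset.sum_add_distrib, Finset.sum_const, Finset.card_range, nsmul_eq_mul]
    linarith
  · intro j hj hja
    have h1 := hclose j hj hja
    have h2 : (j : ℝ) + (N * (x j / h - 1) - j) - N * (ρ / h - 1) = N * ((x j - ρ) / h) := by ring
    rw [h2, abs_mul, abs_div, abs_of_pos hN', abs_of_pos hh] at h1
    rw [← div_div, div_le_iff₀ hN']
    linarith
  · intro j hj
    rw [le_div_iff₀ hh]
    exact hs j hj

/-! ### One modulus against all dyadic intervals -/

/-- The loss from the intervals near `ρ` (the first three) and to its left (a geometric series of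
ratio `1.15/2 = 0.575`). -/
lemma tail_sum_ge (T : ℕ) (s : ℕ → ℝ) (e₀ e₁ e₂ : ℝ) (he₀ : 0 ≤ e₀) (he₁ : 0 ≤ e₁) (he₂ : 0 ≤ e₂)
    (h₀ : 0 < T → -e₀ ≤ s 0) (h₁ : 1 < T → -e₁ ≤ s 1) (h₂ : 2 < T → -e₂ ≤ s 2)
    (h : ∀ t, t + 3 < T → -(4 * (1 / 2) ^ (t + 2)) ≤ s (t + 3)) :
    -(e₀ + 1.15 * e₁ + 1.15 ^ 2 * e₂ + 3.58) ≤ ∑ t ∈ Finset.range T, (1.15 : ℝ) ^ t * s t := by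
  rcases Nat.lt_or_ge T 3 with hT | hT
  · interval_cases T
    · simp; nlinarith
    · have := h₀ (by norm_num)
      simp; nlinarith
    · have := h₀ (by norm_num)
      have := h₁ (by norm_num)
      simp [Finset.sum_range_succ]; nlinarith
  · obtain ⟨r, rfl⟩ := Nat.exists_eq_add_of_le' hT
    have key : ∀ n ≤ r, -(e₀ + 1.15 * e₁ + 1.15 ^ 2 * e₂ + 3.58) + 3.58 * (0.575 : ℝ) ^ n ≤
        ∑ t ∈ Finset.range (n + 3), (1.15 : ℝ) ^ t * s t := by
      intro n
      induction n with
      | zero =>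
        intro _
        have := h₀ (by omega)
        have := h₁ (by omega)
        have := h₂ (by omega)
        simp only [Finset.sum_range_succ, Finset.sum_range_zero]
        norm_num at *
        linarith
      | succ n ih =>
        intro hn
        have h1 := ih (by omega)
        have h2 := h n (by omega)
        rw [show n + 1 + 3 = (n + 3) + 1 by ring, Finset.sum_range_succ]
        have h3 := mul_le_mul_of_nonneg_left h2 (by positivity : (0 : ℝ) ≤ 1.15 ^ (n + 3))
        have h4 : (1.15 : ℝ) ^ (n + 3) * -(4 * (1 / 2) ^ (n + 2)) = -(1.15 ^ 3 * 0.575 ^ n) := by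
          rw [show (0.575 : ℝ) = 1.15 * (1 / 2) by norm_num, mul_pow]; ring
        rw [h4] at h3
        rw [pow_succ (0.575 : ℝ)]
        norm_num at h1 h3 ⊢
        have h5 : (0 : ℝ) < (23 / 40) ^ n := by positivity
        linarith
    refine le_trans ?_ (key r le_rfl)
    have : (0 : ℝ) < 0.575 ^ r := by positivity
    linarith

/-- The gain from the intervals to the right of `ρ`, in units of `log 2`. -/
lemma sum_arith_geom (m : ℕ) :
    ∑ i ∈ Finset.range m, (1.15 : ℝ) ^ i * ((m : ℝ) - 1 - i) = (1.15 ^ m - 1) / 0.0225 - m / 0.15 := by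
  induction m with
  | zero => simp
  | succ m ih =>
    have h : ∑ i ∈ Finset.range m, (1.15 : ℝ) ^ (i + 1) * (((m + 1 : ℕ) : ℝ) - 1 - (i + 1 : ℕ)) =
        1.15 * ∑ i ∈ Finset.range m, (1.15 : ℝ) ^ i * ((m : ℝ) - 1 - i) := by
      rw [Finset.mul_sum]
      refine Finset.sum_congr rfl fun i _ => ?_
      push_cast; ring
    rw [Finset.sum_range_succ', h, ih]
    push_cast
    ring

/-- Makes the exponential gain in `m` dominate the linear correction `m / 0.15` of
`sum_arith_geom`. -/
lemma linear_le_pow (m : ℕ) : 0.8 * (m : ℝ) - 20 ≤ 1.15 ^ m := by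
  rcases Nat.lt_or_ge m 32 with h | h
  · interval_cases m <;> norm_num
  · induction m, h using Nat.le_induction with
    | base => norm_num
    | succ m hm ih =>
      have : (32 : ℝ) ≤ m := by exact_mod_cast hm
      rw [pow_succ]; push_cast; linarith

/-- A single modulus `ρ` contributes at least an absolute constant to the weighted sum, where `S i`
is the average of `log |1 - x/ρ|` over the points of `[2⁻⁽ⁱ⁺¹⁾, 2⁻ⁱ]`. -/
lemma weighted_sum_ge (L : ℕ) (S : ℕ → ℝ) (ρ : ℝ) (hρ : 0 < ρ)
    (hA : ∀ i < L, 4 * (1 / 2) ^ (i + 1) ≤ ρ → -(4 * (1 / 2) ^ (i + 1) / ρ) ≤ S i)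
    (hB : ∀ i < L, Real.log ((1 / 2) ^ (i + 1) / ρ) - 5.1 ≤ S i)
    (hC : ∀ i < L, 2 * ρ ≤ (1 / 2) ^ (i + 1) →
      Real.log ((1 / 2) ^ (i + 1) / ρ) - Real.log 2 ≤ S i) :
    -200 ≤ ∑ i ∈ Finset.range L, (1.15 : ℝ) ^ i * S i := by
  have hl1 := Real.log_two_gt_d9
  have hl2 := Real.log_two_lt_d9
  have hA' : ∀ i < L, ∀ c : ℝ, 0 < c → c ≤ ρ → 4 * (1 / 2) ^ (i + 1) ≤ ρ →
      -(4 * (1 / 2) ^ (i + 1) / c) ≤ S i := by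
    intro i hi c hc hcρ h
    refine le_trans ?_ (hA i hi h)
    rw [neg_le_neg_iff]; gcongr
  have hB' : ∀ i < L, ∀ n : ℕ, ρ ≤ (1 / 2) ^ (i + 1) * 2 ^ n → -(5.1 + n * Real.log 2) ≤ S i := by
    intro i hi n h
    refine le_trans ?_ (hB i hi)
    have h1 : ((1 : ℝ) / 2) ^ n ≤ (1 / 2) ^ (i + 1) / ρ := by
      rw [le_div_iff₀ hρ]
      calc (1 / 2 : ℝ) ^ n * ρ ≤ (1 / 2) ^ n * ((1 / 2) ^ (i + 1) * 2 ^ n) := by gcongr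
        _ = (1 / 2) ^ (i + 1) := by
          rw [mul_comm, mul_assoc, ← mul_pow]; norm_num
    have h2 := Real.log_le_log (by positivity) h1
    rw [Real.log_pow, one_div, Real.log_inv] at h2
    rw [one_div] at *
    linarith
  -- For `ρ ≥ 1/2` only the first two intervals can be near `ρ`; no gain is needed.
  rcases le_or_gt (1 / 2) ρ with hρ2 | hρ2
  · have hb : ∀ i < L, i < 2 → -(6.5 : ℝ) ≤ S i := by
      intro i hi hi2
      rcases le_or_gt (4 * (1 / 2) ^ (i + 1)) ρ with h | h
      · have := hA' i hi _ (by positivity) h h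
        rw [div_self (by positivity)] at this
        linarith
      · have := hB' i hi 2 (by linarith)
        push_cast at this
        linarith
    have := tail_sum_ge L S 6.5 6.5 1 (by norm_num) (by norm_num) (by norm_num)
      (fun h => hb 0 h (by norm_num)) (fun h => hb 1 h (by norm_num)) ?_ ?_
    · refine le_trans ?_ this
      norm_num
    · intro h
      have := hA' 2 h (1 / 2) (by norm_num) hρ2 (by norm_num; linarith)
      norm_num at this ⊢
      linarith
    · intro t ht
      have h1 : ((1 : ℝ) / 2) ^ t ≤ 1 := pow_le_one₀ (by norm_num) (by norm_num)
      have h0 : (0 : ℝ) < (1 / 2) ^ t := by positivity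
      have := hA' (t + 3) ht (1 / 2) (by norm_num) hρ2 (by ring_nf at *; linarith)
      refine le_trans ?_ this
      ring_nf at *; linarith
  -- Here `ρ` lies in the interval of index `m + 1`, namely `(2⁻⁽ᵐ⁺²⁾, 2⁻⁽ᵐ⁺¹⁾]`, and those with `i < m` give a gain.
  obtain ⟨m, hm1, hm2⟩ := exists_nat_pow_near_of_lt_one (x := 2 * ρ) (y := 1 / 2)
    (by linarith) (by linarith) (by norm_num) (by norm_num)
  have hup : ∀ i < L, i < m → ((m : ℝ) - 1 - i) * Real.log 2 ≤ S i := by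
    intro i hi him
    obtain ⟨j, rfl⟩ : ∃ j, m = i + 1 + j := ⟨m - (i + 1), by omega⟩
    have h1 : (2 : ℝ) ^ (j + 1) ≤ (1 / 2) ^ (i + 1) / ρ := by
      rw [le_div_iff₀ hρ]
      calc (2 : ℝ) ^ (j + 1) * ρ = 2 ^ j * (2 * ρ) := by ring
        _ ≤ 2 ^ j * (1 / 2) ^ (i + 1 + j) := by gcongr
        _ = (1 / 2) ^ (i + 1) := by
          rw [pow_add _ (i + 1) j, mul_comm, mul_assoc, ← mul_pow]; norm_num
    have h2 := Real.log_le_log (by positivity) h1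
    rw [Real.log_pow] at h2
    have h3 := hC i hi (hm2.trans (pow_le_pow_of_le_one (by norm_num) (by norm_num) (by omega)))
    push_cast at h2 ⊢
    linarith
  rcases Nat.le_total L m with hLm | hLm
  · refine le_trans (by norm_num) (Finset.sum_nonneg fun i hi => ?_)
    have hi := Finset.mem_range.1 hi
    refine mul_nonneg (by positivity) (le_trans ?_ (hup i hi (by omega)))
    have : (i : ℝ) + 1 ≤ m := by exact_mod_cast (by omega : i + 1 ≤ m)
    exact mul_nonneg (by linarith) (by linarith)
  obtain ⟨T, rfl⟩ := Nat.exists_eq_add_of_le hLm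
  have h1 : Real.log 2 * ((1.15 ^ m - 1) / 0.0225 - m / 0.15) ≤
      ∑ i ∈ Finset.range m, (1.15 : ℝ) ^ i * S i := by
    rw [← sum_arith_geom, Finset.mul_sum]
    refine Finset.sum_le_sum fun i hi => ?_
    have hi := Finset.mem_range.1 hi
    calc _ = (1.15 : ℝ) ^ i * (((m : ℝ) - 1 - i) * Real.log 2) := by ring
      _ ≤ _ := by gcongr; exact hup i (by omega) hi
  have hpm : (0 : ℝ) < (1 / 2) ^ m := by positivity
  have h2 : -24 ≤ ∑ t ∈ Finset.range T, (1.15 : ℝ) ^ t * S (m + t) := by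
    have := tail_sum_ge T (fun t => S (m + t)) 5.1 (5.1 + Real.log 2) (5.1 + 2 * Real.log 2)
      (by norm_num) (by linarith) (by linarith) ?_ ?_ ?_ ?_
    · refine le_trans ?_ this
      norm_num at *
      linarith
    · intro h
      have := hB' (m + 0) (by omega) 0 (by ring_nf at *; linarith)
      simpa using this
    · intro h
      have := hB' (m + 1) (by omega) 1 (by ring_nf at *; linarith)
      simpa using this
    · intro h
      have := hB' (m + 2) (by omega) 2 (by ring_nf at *; linarith)
      simpa using this
    · intro t ht
      have h1 : ((1 : ℝ) / 2) ^ t ≤ 1 := pow_le_one₀ (by norm_num) (by norm_num)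
      have := hA' (m + (t + 3)) (by omega) ((1 / 2) ^ (m + 2)) (by positivity)
        (by ring_nf at *; linarith) ?_
      · refine le_trans (le_of_eq ?_) this
        rw [show m + (t + 3) + 1 = (m + 2) + (t + 2) by ring, pow_add _ (m + 2), neg_inj]
        field_simp
      · have : ((1 : ℝ) / 2) ^ (m + (t + 3) + 1) = (1 / 2) ^ t * (1 / 2) ^ m / 16 := by ring
        rw [this]
        have := mul_le_mul_of_nonneg_right h1 hpm.le
        rw [pow_succ] at hm1
        linarith
  rw [Finset.sum_range_add]
  have h3 : ∑ t ∈ Finset.range T, (1.15 : ℝ) ^ (m + t) * S (m + t) =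
      1.15 ^ m * ∑ t ∈ Finset.range T, (1.15 : ℝ) ^ t * S (m + t) := by
    rw [Finset.mul_sum]
    exact Finset.sum_congr rfl fun t _ => by rw [pow_add]; ring
  rw [h3]
  -- The gain `≈ 30.8 · 1.15 ^ m` exceeds the loss `24 · 1.15 ^ m`, up to terms linear in `m`.
  have hpos : (1 : ℝ) ≤ 1.15 ^ m := one_le_pow₀ (by norm_num)
  have h4 := mul_le_mul_of_nonneg_left h2 (by linarith : (0 : ℝ) ≤ 1.15 ^ m)
  have h5 := linear_le_pow m
  have h6 : 0.693 * ((1.15 : ℝ) ^ m - 1) / 0.0225 ≤ Real.log 2 * ((1.15 ^ m - 1) / 0.0225) := by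
    rw [mul_div_assoc]
    refine mul_le_mul_of_nonneg_right (by linarith) (div_nonneg (by linarith) (by norm_num))
  have h7 : Real.log 2 * (m / 0.15) ≤ 0.6932 * (m / 0.15) :=
    mul_le_mul_of_nonneg_right (by linarith) (by positivity)
  norm_num at *
  linarith

/-! ### The lower bound for the explicit spectrum -/

lemma log_le_four_mul {y s : ℝ} (hs : 0 < s) (h : s ^ 4 = y) : Real.log y ≤ 4 * (s - 1) := by
  rw [← h, Real.log_pow]
  have := Real.log_le_sub_one_of_pos hs
  push_cast; linarith

/-- The `η`-neighbourhoods are short compared with the spacing of the points. -/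
lemma four_mul_width_le {κ η : ℝ} {N : ℕ} (hκ : 16 ≤ κ) (hη : 0 < η) (hηκ : η ≤ 1 / (20 * κ ^ 2))
    (hN : (N : ℝ) ≤ Real.log (1 / η) + 1) : 4 * N * η ≤ 1 / κ := by
  obtain ⟨s, hs, hs4⟩ : ∃ s : ℝ, 0 < s ∧ s ^ 4 = 1 / η := by
    refine ⟨√√(1 / η), by positivity, ?_⟩
    rw [show 4 = 2 * 2 from rfl, pow_mul, Real.sq_sqrt (by positivity), Real.sq_sqrt (by positivity)]
  have hκ0 : 0 < κ := by linarith
  have h1 : 20 * κ ^ 2 ≤ s ^ 4 := by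
    rw [hs4, le_div_iff₀ hη]
    rw [le_div_iff₀ (by positivity)] at hηκ
    linarith
  have h2 : 4 * κ ≤ s ^ 2 := by
    refine le_of_sq_le_sq (by nlinarith) (by positivity) 
  have h3 : 4 ≤ s := by nlinarith
  have h4 : 16 * κ ≤ s ^ 3 := by nlinarith
  have h5 := log_le_four_mul hs hs4
  have h6 : (N : ℝ) ≤ 4 * s := by linarith
  have hηs : η = 1 / s ^ 4 := by rw [hs4]; simp
  rw [hηs, mul_one_div, div_le_div_iff₀ (by positivity) hκ0]
  calc 4 * (N : ℝ) * κ ≤ 4 * (4 * s) * κ := by gcongr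
    _ = s * (16 * κ) := by ring
    _ ≤ s * s ^ 3 := by gcongr
    _ = 1 * s ^ 4 := by ring

/-- The lower bound for the explicit spectrum: `N` points in the middle of equal cells of each of the
`L` dyadic intervals. -/
lemma exists_far_point {κ η : ℝ} (hκ : 2 ≤ κ) (hη : 0 < η) (hηκ : η ≤ 1 / (20 * κ ^ 2)) {L N : ℕ}
    (hL : 2 ^ L ≤ κ) (hL' : κ < 2 ^ (L + 1)) (hN : Real.log (1 / η) ≤ N)
    (hN' : (N : ℝ) ≤ Real.log (1 / η) + 1) (hN0 : 0 < N) {k : ℕ}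
    (hk : (k : ℤ) < ⌊κ ^ (1 / 5 : ℝ) / 377⌋) (p : ℝ[X]) (hp : p.natDegree < k) :
    ∃ i < L, ∃ j < N, ∃ x ∈ Icc ((1 / 2) ^ (i + 1) * (1 + ((j : ℝ) + 1 / 2) / N) - η)
      ((1 / 2) ^ (i + 1) * (1 + ((j : ℝ) + 1 / 2) / N) + η), 1 / 6 ≤ |p.eval x - 1 / x| := by
  by_contra! hcon
  have hκ0 : 0 < κ := by linarith
  have hNr : (0 : ℝ) < N := by exact_mod_cast hN0
  have hη1 : η ≤ 1 := by
    refine hηκ.trans ?_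
    rw [div_le_one (by positivity)]; nlinarith
  set z : ℝ := κ ^ (1 / 5 : ℝ) with hz
  have hz0 : 0 < z := by positivity
  have hz5 : z ^ 5 = κ := by
    rw [hz, ← Real.rpow_natCast, ← Real.rpow_mul hκ0.le]; norm_num
  have hkz : (k : ℝ) + 1 ≤ z / 377 := by
    have := Int.le_floor.1 (Int.add_one_le_iff.2 hk)
    exact_mod_cast this
  have hk1 : (1 : ℝ) ≤ k := by exact_mod_cast (by omega : 1 ≤ k)
  have hz2 : 754 ≤ z := by rw [le_div_iff₀ (by norm_num)] at hkz; linarith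
  have hzκ : 754 ^ 4 * z ≤ κ := by
    calc 754 ^ 4 * z ≤ z ^ 4 * z := by gcongr
      _ = κ := by rw [← hz5]; ring
  have hwidth := four_mul_width_le (by linarith) hη hηκ hN'
  obtain ⟨d, hd, ρ, hρ, hprod⟩ := exists_root_moduli (1 - X * p) (by simp)
  have hdk : d ≤ k := by
    refine hd.trans ((natDegree_sub_le _ _).trans ?_)
    have := natDegree_mul_le (p := (X : ℝ[X])) (q := p)
    rw [natDegree_X] at this
    simp only [natDegree_one]
    omega
  choose x hx hxρ using fun i j : ℕ =>
    exists_avoiding ρ ((1 / 2) ^ (i + 1) * (1 + ((j : ℝ) + 1 / 2) / N)) η hη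
  have hlow : ∀ i < L, 1 / κ ≤ (1 / 2 : ℝ) ^ (i + 1) := by
    intro i hi
    calc 1 / κ ≤ 1 / 2 ^ L := by gcongr
      _ = (1 / 2) ^ L := by rw [div_pow, one_pow]
      _ ≤ _ := pow_le_pow_of_le_one (by norm_num) (by norm_num) hi
  have hcell : ∀ i < L, ∀ j < N, (1 / 2) ^ (i + 1) * (1 + ((j : ℝ) + 1 / 4) / N) ≤ x i j ∧
      x i j ≤ (1 / 2) ^ (i + 1) * (1 + ((j : ℝ) + 3 / 4) / N) := by
    intro i hi j hj
    have h1 : η ≤ (1 / 2 : ℝ) ^ (i + 1) * (1 / (4 * N)) := by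
      rw [mul_one_div, le_div_iff₀ (by positivity)]
      linarith [hlow i hi]
    have h2 : ((j : ℝ) + 1 / 4) / N = (j + 1 / 2) / N - 1 / (4 * N) := by field_simp; ring
    have h3 : ((j : ℝ) + 3 / 4) / N = (j + 1 / 2) / N + 1 / (4 * N) := by field_simp; ring
    have := hx i j
    rw [h2, h3]
    constructor <;> linarith [this.1, this.2]
  have hxlo : ∀ i < L, ∀ j < N, (1 / 2) ^ (i + 1) ≤ x i j := by
    intro i hi j hj
    refine le_trans ?_ (hcell i hi j hj).1
    exact le_mul_of_one_le_right (by positivity) (le_add_of_nonneg_right (by positivity))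
  have hxhi : ∀ i < L, ∀ j < N, x i j ≤ 2 * (1 / 2) ^ (i + 1) := by
    intro i hi j hj
    refine (hcell i hi j hj).2.trans ?_
    rw [mul_comm]
    gcongr
    have : ((j : ℝ) + 3 / 4) / N ≤ 1 := by
      rw [div_le_one hNr]
      have : (j : ℝ) + 1 ≤ N := by exact_mod_cast hj
      linarith
    linarith
  have hspike : ∀ i j l, Real.exp (-(2 * N)) * (1 / 2) ^ (i + 1) ≤ |x i j - ρ l| := by
    intro i j l
    refine le_trans ?_ (hxρ i j l)
    have h1 : Real.exp (-(N : ℝ)) ≤ η := by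
      rw [← Real.le_log_iff_exp_le hη]
      rw [one_div, Real.log_inv] at hN
      linarith
    have h2 : Real.exp (-(2 * N)) = Real.exp (-(N : ℝ)) * Real.exp (-(N : ℝ)) := by
      rw [← Real.exp_add]; ring_nf
    have h3 : ((1 : ℝ) / 2) ^ (i + 1) ≤ 1 := pow_le_one₀ (by norm_num) (by norm_num)
    have h4 : (d : ℝ) + 1 ≤ 1 / η := by
      have : (d : ℝ) ≤ k := by exact_mod_cast hdk
      have h5 : 20 * κ ^ 2 ≤ 1 / η := by
        rw [le_div_iff₀ hη]
        rw [le_div_iff₀ (by positivity)] at hηκ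
        linarith
      nlinarith
    calc Real.exp (-(2 * N)) * (1 / 2) ^ (i + 1) ≤ Real.exp (-(2 * N)) * 1 := by gcongr
      _ ≤ η * η := by
        rw [h2, mul_one]
        exact mul_le_mul h1 h1 (Real.exp_pos _).le hη.le
      _ = η / (1 / η) := by field_simp
      _ ≤ η / (d + 1) := by gcongr
  have hpos : ∀ i < L, ∀ j < N, ∀ l, 0 < |1 - x i j / ρ l| := by
    intro i hi j hj l
    have h1 : 0 < |x i j - ρ l| := lt_of_lt_of_le (by positivity) (hspike i j l)
    rw [abs_pos] at h1 ⊢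
    intro h
    apply h1
    have := hρ l
    field_simp at h
    linarith
  have hroot : ∀ l, -200 ≤ ∑ i ∈ Finset.range L, (1.15 : ℝ) ^ i *
      ((∑ j ∈ Finset.range N, Real.log |1 - x i j / ρ l|) / N) := by
    intro l
    refine weighted_sum_ge L _ (ρ l) (hρ l) ?_ ?_ ?_
    · intro i hi h
      rw [le_div_iff₀' hNr]
      exact sum_log_ge_of_far (hρ l)
        (fun j hj => ⟨le_trans (by positivity) (hxlo i hi j hj), hxhi i hi j hj⟩) h
    · intro i hi
      rw [le_div_iff₀' hNr]
      exact sum_log_ge hN0 (hρ l) (by positivity) (hcell i hi) (fun j hj => hspike i j l)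
    · intro i hi h
      rw [le_div_iff₀' hNr]
      exact sum_log_ge_of_small (hρ l) (hxlo i hi) h
  have hpoint : ∀ i < L, ∀ j < N, ∑ l, Real.log |1 - x i j / ρ l| ≤ -1 := by
    intro i hi j hj
    have hx0 : 0 < x i j := lt_of_lt_of_le (by positivity) (hxlo i hi j hj)
    have hx1 : x i j ≤ 1 := by
      refine (hxhi i hi j hj).trans ?_
      have h3 : ((1 : ℝ) / 2) ^ i ≤ 1 := pow_le_one₀ (by norm_num) (by norm_num)
      rw [pow_succ]; linarith
    have h1 := hcon i hi j hj (x i j) (hx i j)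
    have h2 : |(1 - X * p).eval (x i j)| ≤ 1 / 6 := by
      have : (1 - X * p).eval (x i j) = -(x i j * (p.eval (x i j) - 1 / x i j)) := by
        simp only [eval_sub, eval_one, eval_mul, eval_X]
        field_simp
        ring
      rw [this, abs_neg, abs_mul, abs_of_pos hx0]
      nlinarith [abs_nonneg (p.eval (x i j) - 1 / x i j)]
    rw [← Real.log_prod (fun l _ => (hpos i hi j hj l).ne')]
    have h3 := (hprod (x i j) hx0.le).trans h2
    have h4 : 0 < ∏ l, |1 - x i j / ρ l| := Finset.prod_pos fun l _ => hpos i hi j hj l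
    rw [Real.log_le_iff_le_exp h4, Real.exp_neg]
    refine h3.trans ?_
    rw [one_div]
    have := Real.exp_one_lt_d9
    exact inv_anti₀ (Real.exp_pos _) (by linarith)
  have hsum : ∑ l, ∑ i ∈ Finset.range L, (1.15 : ℝ) ^ i *
      ((∑ j ∈ Finset.range N, Real.log |1 - x i j / ρ l|) / N) ≤
      -∑ i ∈ Finset.range L, (1.15 : ℝ) ^ i := by
    rw [Finset.sum_comm, ← Finset.sum_neg_distrib]
    refine Finset.sum_le_sum fun i hi => ?_
    have hi := Finset.mem_range.1 hi
    rw [← Finset.mul_sum, ← Finset.sum_div, Finset.sum_comm]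
    have h1 : ∑ j ∈ Finset.range N, ∑ l, Real.log |1 - x i j / ρ l| ≤ N * -1 := by
      rw [← nsmul_eq_mul]
      refine (Finset.sum_le_card_nsmul _ _ (-1) fun j hj =>
        hpoint i hi j (Finset.mem_range.1 hj)).trans_eq (by rw [Finset.card_range])
    have h2 : (∑ j ∈ Finset.range N, ∑ l, Real.log |1 - x i j / ρ l|) / N ≤ -1 := by
      rw [div_le_iff₀' hNr]; exact h1
    have := mul_le_mul_of_nonneg_left h2 (by positivity : (0 : ℝ) ≤ 1.15 ^ i)
    linarith
  have hall : -(200 * (d : ℝ)) ≤ ∑ l, ∑ i ∈ Finset.range L, (1.15 : ℝ) ^ i *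
      ((∑ j ∈ Finset.range N, Real.log |1 - x i j / ρ l|) / N) := by
    have := Finset.card_nsmul_le_sum Finset.univ _ _ fun l _ => hroot l
    rw [Finset.card_univ, Fintype.card_fin, nsmul_eq_mul] at this
    linarith
  -- The last weight `1.15 ^ (L - 1)` alone already exceeds `200 d`.
  obtain ⟨M, rfl⟩ : ∃ M, L = M + 1 := by
    cases L with
    | zero => norm_num at hL'; linarith
    | succ M => exact ⟨M, rfl⟩
  have hweight : (1.15 : ℝ) ^ M ≤ ∑ i ∈ Finset.range (M + 1), (1.15 : ℝ) ^ i :=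
    Finset.single_le_sum (f := fun i => (1.15 : ℝ) ^ i) (fun i _ => by positivity)
      (Finset.mem_range.2 M.lt_succ_self)
  have hzM : z ≤ 1.15 ^ (M + 1 + 1) := by
    refine le_of_pow_le_pow_left₀ (n := 5) (by norm_num) (by positivity) ?_
    rw [hz5, ← pow_mul, mul_comm, pow_mul]
    exact hL'.le.trans (by gcongr; norm_num)
  have hdk' : (d : ℝ) ≤ k := by exact_mod_cast hdk
  have hpM : (0 : ℝ) < 1.15 ^ M := by positivity
  rw [pow_succ, pow_succ] at hzM
  generalize (1.15 : ℝ) ^ M = w at hzM hpM hweight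
  linarith

/-! ### Realisation by a matrix -/

/-- Any positive numbers are the eigenvalues of a positive definite matrix. -/
lemma exists_posDef_range_eigenvalues {n : ℕ} (d : Fin n → ℝ) (hd : ∀ t, 0 < d t) :
    ∃ (A : Matrix (Fin n) (Fin n) ℝ) (hA : A.IsHermitian), A.PosDef ∧
      Set.range hA.eigenvalues = Set.range d :=
  ⟨diagonal d, isHermitian_diagonal d, PosDef.diagonal hd, by
    rw [← IsHermitian.spectrum_real_eq_range_eigenvalues, spectrum_diagonal]⟩

/-- Lower bound against stable approximating polynomials (matrix form): there is a
constant `c ∈ [1/5, 1/2]` such that for any `κ ≥ 2`, `0 < η ≤ 1/(20κ²)` and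
`n ≥ ⌊log₂ κ⌋·⌈ln(1/η)⌉`, some `n × n` positive definite matrix `A` with all eigenvalues in
`[1/κ, 1]` satisfies: for every `k < ⌊κ^c/377⌋` and every polynomial `p` of degree `< k`,
there is a point `x` within distance `η` of some eigenvalue of `A` with `|p(x) - 1/x| ≥ 1/6`. -/
theorem stable_approximating_polynomial_lower_bound :
    ∃ c : ℝ, 1 / 5 ≤ c ∧ c ≤ 1 / 2 ∧
      ∀ κ : ℝ, 2 ≤ κ → ∀ η : ℝ, 0 < η → η ≤ 1 / (20 * κ ^ 2) →
        ∀ n : ℕ, ⌊Real.logb 2 κ⌋ * ⌈Real.log (1 / η)⌉ ≤ (n : ℤ) →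
          ∃ (A : Matrix (Fin n) (Fin n) ℝ) (hA : A.IsHermitian),
            A.PosDef ∧ (∀ i, hA.eigenvalues i ∈ Set.Icc (1 / κ) 1) ∧
            ∀ k : ℕ, (k : ℤ) < ⌊κ ^ c / 377⌋ →
              ∀ p : Polynomial ℝ, p.natDegree < k →
                ∃ x ∈ ⋃ i, Set.Icc (hA.eigenvalues i - η) (hA.eigenvalues i + η),
                  1 / 6 ≤ |p.eval x - 1 / x| := by
  refine ⟨1 / 5, le_rfl, by norm_num, fun κ hκ η hη hηκ n hn => ?_⟩
  have hκ0 : 0 < κ := by linarith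
  have hlogη : 0 < Real.log (1 / η) := by
    refine Real.log_pos ?_
    rw [lt_div_iff₀ hη, one_mul]
    refine hηκ.trans_lt ?_
    rw [div_lt_one (by positivity)]; nlinarith
  have hlogκ : 0 ≤ Real.logb 2 κ := Real.logb_nonneg (by norm_num) (by linarith)
  obtain ⟨L, hLdef⟩ := Int.eq_ofNat_of_zero_le (Int.floor_nonneg.2 hlogκ)
  obtain ⟨N, hNdef⟩ := Int.eq_ofNat_of_zero_le (Int.ceil_nonneg hlogη.le)
  rw [hLdef, hNdef] at hn
  have hLN : L * N ≤ n := by exact_mod_cast hn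
  have hL : (2 : ℝ) ^ L ≤ κ := by
    have h := Int.floor_le (Real.logb 2 κ)
    rw [hLdef, Real.le_logb_iff_rpow_le (by norm_num) hκ0] at h
    exact_mod_cast h
  have hL' : κ < (2 : ℝ) ^ (L + 1) := by
    have h := Int.lt_floor_add_one (Real.logb 2 κ)
    rw [hLdef, Real.logb_lt_iff_lt_rpow (by norm_num) hκ0] at h
    exact_mod_cast h
  have hN : Real.log (1 / η) ≤ N := by
    have h := Int.le_ceil (Real.log (1 / η))
    rw [hNdef] at h
    exact_mod_cast h
  have hN' : (N : ℝ) ≤ Real.log (1 / η) + 1 := by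
    have h := (Int.ceil_lt_add_one (Real.log (1 / η))).le
    rw [hNdef] at h
    exact_mod_cast h
  have hNr : (0 : ℝ) < N := hlogη.trans_le hN
  have hN0 : 0 < N := by exact_mod_cast hNr
  have hd : ∀ i < L, ∀ j < N,
      (1 / 2) ^ (i + 1) * (1 + ((j : ℝ) + 1 / 2) / N) ∈ Icc (1 / κ) 1 := by
    intro i hi j hj
    constructor
    · calc 1 / κ ≤ 1 / 2 ^ L := by gcongr
        _ = (1 / 2) ^ L := by rw [div_pow, one_pow]
        _ ≤ (1 / 2) ^ (i + 1) := pow_le_pow_of_le_one (by norm_num) (by norm_num) hi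
        _ ≤ _ := le_mul_of_one_le_right (by positivity) (le_add_of_nonneg_right (by positivity))
    · have h1 : ((j : ℝ) + 1 / 2) / N ≤ 1 := by
        rw [div_le_one hNr]
        have : (j : ℝ) + 1 ≤ N := by exact_mod_cast hj
        linarith
      have h3 : ((1 : ℝ) / 2) ^ i ≤ 1 := pow_le_one₀ (by norm_num) (by norm_num)
      calc _ ≤ ((1 : ℝ) / 2) ^ (i + 1) * (1 + 1) := by gcongr
        _ = (1 / 2) ^ i := by rw [pow_succ]; ring
        _ ≤ 1 := h3
  set d : Fin n → ℝ := fun t => if (t : ℕ) < L * N then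
    (1 / 2) ^ ((t : ℕ) / N + 1) * (1 + ((((t : ℕ) % N : ℕ) : ℝ) + 1 / 2) / N) else 1 with hddef
  have hdmem : ∀ t, d t ∈ Icc (1 / κ) 1 := by
    intro t
    simp only [hddef]
    split_ifs with h
    · exact hd _ ((Nat.div_lt_iff_lt_mul hN0).2 h) _ (Nat.mod_lt _ hN0)
    · exact ⟨by rw [div_le_one hκ0]; linarith, le_rfl⟩
  obtain ⟨A, hA, hpd, hrange⟩ := exists_posDef_range_eigenvalues d
    (fun t => lt_of_lt_of_le (by positivity) (hdmem t).1)
  refine ⟨A, hA, hpd, fun i => ?_, fun k hk p hp => ?_⟩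
  · obtain ⟨t, ht⟩ : hA.eigenvalues i ∈ Set.range d := hrange ▸ Set.mem_range_self i
    rw [← ht]; exact hdmem t
  · obtain ⟨i, hi, j, hj, x, hx, hfar⟩ := exists_far_point hκ hη hηκ hL hL' hN hN' hN0 hk p hp
    have hlt : i * N + j < L * N := by
      calc i * N + j < i * N + N := by omega
        _ = (i + 1) * N := by ring
        _ ≤ L * N := Nat.mul_le_mul_right N hi
    have hdt : d ⟨i * N + j, hlt.trans_le hLN⟩ =
        (1 / 2) ^ (i + 1) * (1 + ((j : ℝ) + 1 / 2) / N) := by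
      have h1 : (i * N + j) / N = i := by
        rw [mul_comm, Nat.mul_add_div hN0, Nat.div_eq_of_lt hj, add_zero]
      have h2 : (i * N + j) % N = j := by
        rw [mul_comm, Nat.mul_add_mod, Nat.mod_eq_of_lt hj]
      simp only [hddef, hlt, if_true, h1, h2]
    obtain ⟨t, ht⟩ : d ⟨i * N + j, hlt.trans_le hLN⟩ ∈ Set.range hA.eigenvalues :=
      hrange ▸ Set.mem_range_self _
    refine ⟨x, Set.mem_iUnion.2 ⟨t, ?_⟩, hfar⟩
    rw [ht, hdt]; exact hx
end

section
/- There exists a constant c with 1/5 ≤ c ≤ 1/2 such that: for every real κ ≥ 2, every real η with 0 < η ≤ 1/(20κ²), and every integer n ≥ ⌊log₂ κ⌋ · ⌈ln(1/η)⌉, there exist real numbers λ₁, …, λₙ ∈ [1/κ, 1] such that every real polynomial p with degree at most κ^c/377 and p(0) = 1 admits a point x ∈ ⋃_{i=1}^n [λ_i − η, λ_i + η] with |p(x)| ≥ 1/3. -/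
/-!
Take `c = 1 / 5` and place `L = ⌈ln (1 / η)⌉` equispaced points in each dyadic scale
`[2^(-j-1), 2^(-j)]`, `j < M = ⌊log₂ κ⌋`.

Let `p` have degree `k` and `p(0) = 1`, so that `log |p(x)| = ∑ log |1 - x / r|` over the roots
`r`; replacing each `r` by its modulus only decreases this for `x ≥ 0` (`exists_root_moduli`). By
pigeonhole each `η`-neighbourhood of a grid point contains a point `x` at distance at least `η / k`
from all root moduli (`exists_avoiding_point`). Average `log |p(x)|` over these points, giving scale
`j` the weight `g^j` with `g = 2^(1/5)`. For one root modulus `R`: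

* scales well above `R` gain linearly in their distance from `R` on the logarithmic axis;
* the three scales around `R` lose a constant each (`near_scale`): a single point may be as bad as
  `log (η / k)`, but this is divided by `L ≥ ln (1 / η)`;
* scales below `R` lose geometrically little.

The weight grows slowly enough for the gains to beat the losses, except when `R` is so large that
there are too few scales above it; in that case the weights of the losses are bounded. So each root
costs at most the constant `896` (`sum_scaleBound`), whereas the total weight is of order
`κ^(1/5)`. Hence `k ≤ κ^(1/5) / 377` roots cannot bring the average of `log |p|` down to `-ln 3`
(`exists_large_value`).
-/

open Matrix Polynomial Set

/-! ### Roots, and points avoiding them -/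

/-- A polynomial with `p(0) = 1` is `∏ (1 - x / r)` over its complex roots `r`. For real `x ≥ 0` the
reverse triangle inequality gives `|1 - x / r| ≥ |1 - x / ‖r‖|`, so only the moduli of the roots
(the multiset `S`) matter for lower bounds. -/
lemma exists_root_moduli_s8 (p : Polynomial ℝ) (hp : p.eval 0 = 1) :
    ∃ S : Multiset ℝ, S.card = p.natDegree ∧ (∀ R ∈ S, 0 < R) ∧
      ∀ x : ℝ, 0 ≤ x → (S.map fun R => |1 - x / R|).prod ≤ |p.eval x| := by
  set P : Polynomial ℂ := p.map (algebraMap ℝ ℂ) with hP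
  have hs : P.Splits := IsAlgClosed.splits P
  have hev : ∀ x : ℝ, P.eval (x : ℂ) = ((p.eval x : ℝ) : ℂ) := by
    intro x
    rw [hP, Polynomial.eval_map_algebraMap]
    exact Polynomial.aeval_algebraMap_apply_eq_algebraMap_eval x p
  have h0 : P.eval 0 = 1 := by
    have := hev 0
    rw [hp] at this
    simpa using this
  have hne : ∀ r ∈ P.roots, r ≠ 0 := by
    rintro r hr rfl
    have := (Polynomial.mem_roots'.1 hr).2
    rw [Polynomial.IsRoot, h0] at this
    exact one_ne_zero this
  refine ⟨P.roots.map fun r => ‖r‖, ?_, ?_, ?_⟩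
  · rw [Multiset.card_map, ← hs.natDegree_eq_card_roots, hP, Polynomial.natDegree_map]
  · intro R hR
    obtain ⟨r, hr, rfl⟩ := Multiset.mem_map.1 hR
    exact norm_pos_iff.2 (hne r hr)
  · intro x hx
    have key : P.eval (x : ℂ) = (P.roots.map fun r => 1 - (x : ℂ) / r).prod := by
      have e1 := hs.eval_eq_prod_roots (x : ℂ)
      have e0 := hs.eval_eq_prod_roots 0
      rw [h0] at e0
      have hsplit : (P.roots.map fun r => (x : ℂ) - r).prod =
          (P.roots.map fun r => 0 - r).prod *
            (P.roots.map fun r => 1 - (x : ℂ) / r).prod := by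
        rw [← Multiset.prod_map_mul]
        congr 1
        refine Multiset.map_congr rfl fun r hr => ?_
        have := hne r hr
        field_simp
        ring
      rw [e1, hsplit, ← mul_assoc, ← e0, one_mul]
    have hn : |p.eval x| = (P.roots.map fun r => ‖1 - (x : ℂ) / r‖).prod := by
      have : |p.eval x| = ‖P.eval (x : ℂ)‖ := by rw [hev, Complex.norm_real, Real.norm_eq_abs]
      rw [this, key]
      have := map_multiset_prod (normHom : ℂ →*₀ ℝ) (P.roots.map fun r => 1 - (x : ℂ) / r)
      simpa [Multiset.map_map, Function.comp_def] using this
    rw [hn, Multiset.map_map]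
    refine Multiset.prod_map_le_prod_map₀ _ _ (fun r _ => abs_nonneg _) fun r hr => ?_
    have hr0 := norm_pos_iff.2 (hne r hr)
    have e1 : 1 - x / ‖r‖ = (‖r‖ - x) / ‖r‖ := by field_simp
    have e2 : 1 - (x : ℂ) / r = (r - x) / r := by
      have := hne r hr
      field_simp
    simp only [Function.comp]
    rw [e1, e2, abs_div, norm_div, abs_of_pos hr0]
    have h3 : |‖r‖ - x| ≤ ‖r - (x : ℂ)‖ := by
      have := abs_norm_sub_norm_le r (x : ℂ)
      rwa [Complex.norm_real, Real.norm_eq_abs, abs_of_nonneg hx] at this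
    gcongr

/-- Pigeonhole: among the `k + 1` points `a - η + (2η / k) t`, `0 ≤ t ≤ k`, each of the at most `k`
elements of `S` is within distance `< η / k` of at most one. -/
lemma exists_avoiding_point (S : Finset ℝ) (k : ℕ) (hk : 1 ≤ k) (hS : S.card ≤ k)
    (a η : ℝ) (hη : 0 < η) :
    ∃ x ∈ Set.Icc (a - η) (a + η), ∀ R ∈ S, η / k ≤ |x - R| := by
  by_contra! H
  have hk0 : (0 : ℝ) < k := by exact_mod_cast hk
  have hmem : ∀ t ∈ Finset.range (k + 1),
      ∃ R ∈ S, |(a - η + 2 * η / k * t) - R| < η / k := by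
    intro t ht
    apply H
    have ht' : (t : ℝ) ≤ k := by
      have := Finset.mem_range.1 ht
      exact_mod_cast Nat.lt_succ_iff.1 this
    constructor
    · have : 0 ≤ 2 * η / k * t := by positivity
      linarith
    · have : 2 * η / k * t ≤ 2 * η / k * k := by gcongr
      have h2 : 2 * η / k * k = 2 * η := by field_simp
      linarith
  choose! f hf hf' using hmem
  obtain ⟨t, ht, u, hu, htu, he⟩ := Finset.exists_ne_map_eq_of_card_lt_of_maps_to
    (s := Finset.range (k + 1)) (t := S) (by simpa using Nat.lt_succ_of_le hS) hf
  have h1 := hf' t ht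
  have h2 := hf' u hu
  rw [← he] at h2
  have h3 : |2 * η / k * ((t : ℝ) - u)| < 2 * η / k := by
    have e1 : 2 * η / k * ((t : ℝ) - u) = (a - η + 2 * η / k * t - f t) -
        (a - η + 2 * η / k * u - f t) := by ring
    have e2 : 2 * η / (k : ℝ) = η / k + η / k := by ring
    rw [abs_lt] at h1 h2 ⊢
    rw [e1]
    constructor <;> linarith [h1.1, h1.2, h2.1, h2.2]
  rw [abs_mul, abs_of_pos (by positivity : 0 < 2 * η / (k : ℝ))] at h3
  have h4 : |(t : ℝ) - u| < 1 := by
    by_contra! h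
    have : 2 * η / k * 1 ≤ 2 * η / k * |(t : ℝ) - u| := by gcongr
    linarith
  have h5 : |(t : ℤ) - u| < 1 := by exact_mod_cast h4
  rw [Int.abs_lt_one_iff] at h5
  omega

/-! ### Scales close to a root -/

lemma sum_log_div (c : ℝ) (hc : 0 < c) (n : ℕ) :
    ∑ i ∈ Finset.range n, Real.log (((i : ℝ) + 1) / c) =
      Real.log (n.factorial) - n * Real.log c := by
  induction n with
  | zero => simp
  | succ n ih =>
    have h1 : ((n.factorial : ℕ) : ℝ) ≠ 0 := by positivity
    have h2 : (n : ℝ) + 1 ≠ 0 := by positivity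
    rw [Finset.sum_range_succ, ih, Nat.factorial_succ, Real.log_div h2 hc.ne']
    push_cast
    rw [Real.log_mul h2 h1]
    ring

/-- A lower bound for the logarithm of `a! b! / (16 L)^(a + b)`, from `(a+b)! ≤ 2^(a+b) a! b!` and
`L^(a+b) / (a+b)! ≤ e^L`. -/
lemma log_factorials_ge (a b L : ℕ) (hL : L = a + 1 + b) :
    -(L * (5 * Real.log 2) + L) ≤
      (Real.log a.factorial - a * Real.log (16 * L)) +
        (Real.log b.factorial - b * Real.log (16 * L)) := by
  have hL0 : (0 : ℝ) < L := by exact_mod_cast (by omega : 0 < L)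
  have h1 : ((a + b).choose a : ℝ) ≤ 2 ^ (a + b) := by
    exact_mod_cast Nat.choose_le_two_pow _ _
  have h2 : ((a + b).choose a : ℝ) * a.factorial * b.factorial = (a + b).factorial := by
    have := Nat.add_choose_mul_factorial_mul_factorial a b
    rw [← Nat.choose_symm_add] at this
    exact_mod_cast this
  have h3 : (L : ℝ) ^ (a + b) / (a + b).factorial ≤ Real.exp L :=
    Real.pow_div_factorial_le_exp L hL0.le _
  have h4 : (L : ℝ) ^ (a + b) ≤ Real.exp L * (2 ^ (a + b) * (a.factorial * b.factorial)) := by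
    rw [div_le_iff₀ (by positivity), ← h2] at h3
    refine h3.trans ?_
    rw [mul_assoc _ (a.factorial : ℝ)]
    gcongr
  have h5 := Real.log_le_log (by positivity) h4
  have fa : ((a.factorial : ℕ) : ℝ) ≠ 0 := by positivity
  have fb : ((b.factorial : ℕ) : ℝ) ≠ 0 := by positivity
  rw [Real.log_mul (by positivity) (by positivity), Real.log_mul (by positivity) (by positivity),
    Real.log_mul fa fb, Real.log_exp, Real.log_pow, Real.log_pow] at h5
  have h6 : Real.log (16 * L) = 4 * Real.log 2 + Real.log L := by
    rw [Real.log_mul (by norm_num) hL0.ne', show (16 : ℝ) = 2 ^ 4 by norm_num, Real.log_pow]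
    norm_num
  have hl2 : 0 < Real.log 2 := Real.log_pos (by norm_num)
  have hab : ((a + b : ℕ) : ℝ) ≤ L := by exact_mod_cast (by omega : a + b ≤ L)
  rw [h6]
  push_cast at h5 hab
  nlinarith

/-- The contribution of a scale whose points may be close to the root modulus `R`: the average of
`log |1 - x_i / R|` over the `L` points is bounded below by an absolute constant. The point
nearest to `R` contributes at least `log (η / (2k)) ≥ -(5 / 4) L`; by separation, the point `i`
steps away from it has `|1 - x / R| ≥ i / (16 L)`, and these terms are controlled by factorials. -/
lemma near_scale (L k : ℕ) (hL : 1 ≤ L) (hk : 1 ≤ k) (x : ℕ → ℝ) (s η R : ℝ) (hR : 0 < R)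
    (hs : 0 < s) (hRs : R ≤ 4 * s) (hR2 : R ≤ 2) (hη : 0 < η)
    (hsep : ∀ i < L, ∀ i' < L, |(i : ℝ) - i'| * (s / (2 * L)) ≤ |x i - x i'|)
    (havoid : ∀ i < L, η / k ≤ |x i - R|)
    (hlη : Real.log (1 / η) ≤ L) (hlk : Real.log (2 * k) ≤ L / 4) :
    -5.72 * L ≤ ∑ i ∈ Finset.range L, Real.log |1 - x i / R| := by
  have hL0 : (0 : ℝ) < L := by exact_mod_cast hL
  have hk0 : (0 : ℝ) < k := by exact_mod_cast hk
  obtain ⟨a, ha, hmin⟩ := Finset.exists_min_image (Finset.range L) (fun i => |x i - R|)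
    ⟨0, Finset.mem_range.2 hL⟩
  rw [Finset.mem_range] at ha
  have hform : ∀ i, |1 - x i / R| = |x i - R| / R := by
    intro i
    rw [show 1 - x i / R = -((x i - R) / R) by field_simp; ring, abs_neg, abs_div, abs_of_pos hR]
  have hfar : ∀ i < L, |(i : ℝ) - a| / (16 * L) ≤ |1 - x i / R| := by
    intro i hi
    have h1 := hsep i hi a ha
    have h2 := hmin i (Finset.mem_range.2 hi)
    have h3 : |x i - x a| ≤ |x i - R| + |x a - R| := by
      rw [abs_sub_comm (x a) R]
      exact abs_sub_le _ _ _
    rw [hform, le_div_iff₀ hR]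
    have h4 : |(i : ℝ) - a| / (16 * L) * R ≤ |(i : ℝ) - a| / (16 * L) * (4 * s) := by gcongr
    have h5 : |(i : ℝ) - a| / (16 * L) * (4 * s) = |(i : ℝ) - a| * (s / (2 * L)) / 2 := by
      field_simp
      ring
    linarith
  have hclose : η / (2 * k) ≤ |1 - x a / R| := by
    rw [hform, le_div_iff₀ hR]
    have h1 := havoid a ha
    have : η / (2 * k) * R ≤ η / (2 * k) * 2 := by gcongr
    have h2 : η / (2 * k) * 2 = η / k := by field_simp
    linarith
  obtain ⟨b, hb⟩ : ∃ b, L = a + 1 + b := ⟨L - (a + 1), by omega⟩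
  have s1 : ∑ i ∈ Finset.range a, Real.log (((i : ℝ) + 1) / (16 * L)) ≤
      ∑ i ∈ Finset.range a, Real.log |1 - x i / R| := by
    rw [← Finset.sum_range_reflect]
    refine Finset.sum_le_sum fun i hi => ?_
    have hi' := Finset.mem_range.1 hi
    have e : ((a - 1 - i : ℕ) : ℝ) + 1 = |(i : ℝ) - a| := by
      have h1 : ((a - 1 - i : ℕ) : ℝ) + 1 + i = a := by
        exact_mod_cast (by omega : a - 1 - i + 1 + i = a)
      have h2 : (i : ℝ) ≤ a := by exact_mod_cast hi'.le
      rw [abs_of_nonpos (by linarith)]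
      linarith
    have := hfar i (by omega)
    rw [← e] at this
    exact Real.log_le_log (by positivity) this
  have s2 : ∑ i ∈ Finset.range b, Real.log (((i : ℝ) + 1) / (16 * L)) ≤
      ∑ i ∈ Finset.range b, Real.log |1 - x (a + 1 + i) / R| := by
    refine Finset.sum_le_sum fun i hi => ?_
    have hi' := Finset.mem_range.1 hi
    have e : (i : ℝ) + 1 = |((a + 1 + i : ℕ) : ℝ) - a| := by
      push_cast
      rw [abs_of_nonneg (by linarith [(Nat.cast_nonneg i : (0 : ℝ) ≤ i)])]
      ring
    have := hfar (a + 1 + i) (by omega)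
    rw [← e] at this
    exact Real.log_le_log (by positivity) this
  have s3 : -(5 / 4 * (L : ℝ)) ≤ Real.log |1 - x a / R| := by
    refine le_trans ?_ (Real.log_le_log (by positivity) hclose)
    rw [Real.log_div hη.ne' (by positivity)]
    rw [one_div, Real.log_inv] at hlη
    linarith
  have hsum : ∑ i ∈ Finset.range L, Real.log |1 - x i / R| =
      ∑ i ∈ Finset.range a, Real.log |1 - x i / R| + Real.log |1 - x a / R| +
        ∑ i ∈ Finset.range b, Real.log |1 - x (a + 1 + i) / R| := by
    conv_lhs => rw [hb]
    rw [Finset.sum_range_add, Finset.sum_range_succ]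
  rw [sum_log_div _ (by positivity)] at s1 s2
  have := log_factorials_ge a b L hb
  have hl2 := Real.log_two_lt_d9
  rw [hsum]
  nlinarith

/-! ### The weighted sum over the scales -/

/-- Lower bound for the average of `log |1 - x / R|` over the points `x` of the scale
`[2^(-j-1), 2^(-j)]`, when `2^(-m-1) < R ≤ 2^(-m)`, as a function of `d = j - m`: a gain
proportional to `-d - 2` for scales well above `R`, a constant loss at the three scales around
`R`, and a geometrically small loss below. -/
noncomputable def scaleBound (d : ℤ) : ℝ :=
  if d ≤ -2 then 0.69 * (-d - 2) else if d ≤ 1 then -5.72 else -4 * (1 / 2 : ℝ) ^ d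

/-- A bounded nonnegative function of `d` whose increments are at most `g^d * scaleBound d`
(`potential_step`), where `g = 2^(1/5)`. For `d ≤ -2` it accumulates the gains of the scales
`-25 ≤ d`; truncating there keeps `potential` zero far to the left. The remaining values pay for
the three near scales and the geometric tail. -/
noncomputable def potential (g : ℝ) (d : ℤ) : ℝ :=
  if d ≤ -2 then ∑ l ∈ Finset.Ico (-2 - d).toNat 24, 0.69 * (l : ℝ) * g⁻¹ ^ (l + 2)
  else if d = -1 then 5.5 * (g / 2) + 5.72 * g + 5.72
  else if d = 0 then 5.5 * (g / 2) + 5.72 * g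
  else 5.5 * (g / 2) ^ d

lemma inv_bounds {g : ℝ} (h1 : 1.148 < g) (h2 : g < 1.149) : 0.87 ≤ g⁻¹ ∧ g⁻¹ ≤ 0.872 := by
  constructor
  · rw [le_inv_comm₀ (by norm_num) (by linarith)]
    norm_num
    linarith
  · rw [inv_le_comm₀ (by linarith) (by norm_num)]
    norm_num
    linarith

lemma potential_nonneg {g : ℝ} (h1 : 1.148 < g) (d : ℤ) : 0 ≤ potential g d := by
  have : 0 < g := by linarith
  unfold potential
  split_ifs <;> positivity

lemma potential_le {g : ℝ} (h1 : 1.148 < g) (h2 : g < 1.149) (d : ℤ) : potential g d ≤ 28 := by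
  have hg : 0 < g := by linarith
  obtain ⟨q1, q2⟩ := inv_bounds h1 h2
  unfold potential
  split_ifs with c1 c2 c3
  · calc _ ≤ ∑ l ∈ Finset.range 24, 0.69 * (l : ℝ) * g⁻¹ ^ (l + 2) := by
          refine Finset.sum_le_sum_of_subset_of_nonneg ?_ fun _ _ _ => by positivity
          intro l hl
          simp at hl ⊢
          omega
      _ ≤ ∑ l ∈ Finset.range 24, 0.69 * (l : ℝ) * 0.872 ^ (l + 2) := by
          gcongr
      _ ≤ 28 := by norm_num [Finset.sum_range_succ]
  · linarith
  · linarith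
  · obtain ⟨n, rfl⟩ : ∃ n : ℕ, d = n := ⟨d.toNat, by omega⟩
    rw [zpow_natCast]
    have := pow_le_one₀ (n := n) (by positivity : 0 ≤ g / 2) (by linarith)
    linarith

lemma potential_eq_zero (g : ℝ) (d : ℤ) (hd : d ≤ -26) : potential g d = 0 := by
  unfold potential
  rw [if_pos (by omega), Finset.Ico_eq_empty (by omega), Finset.sum_empty]

lemma potential_step {g : ℝ} (h1 : 1.148 < g) (h2 : g < 1.149) (d : ℤ) :
    potential g d - potential g (d - 1) ≤ g ^ d * scaleBound d := by
  have hg : 0 < g := by linarith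
  obtain ⟨q1, q2⟩ := inv_bounds h1 h2
  have hgi : g * g⁻¹ = 1 := mul_inv_cancel₀ hg.ne'
  have hcases : d ≤ -2 ∨ d = -1 ∨ d = 0 ∨ d = 1 ∨ 2 ≤ d := by omega
  rcases hcases with h | rfl | rfl | rfl | h
  · obtain ⟨l, rfl⟩ : ∃ l : ℕ, d = -2 - l := ⟨(-2 - d).toNat, by omega⟩
    have e1 : (-2 - (-2 - (l : ℤ))).toNat = l := by omega
    have e2 : (-2 - (-2 - (l : ℤ) - 1)).toNat = l + 1 := by omega
    have e3 : g ^ (-2 - (l : ℤ)) = g⁻¹ ^ (l + 2) := by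
      rw [show (-2 - (l : ℤ)) = -((l + 2 : ℕ) : ℤ) by push_cast; ring, _root_.zpow_neg, zpow_natCast,
        inv_pow]
    unfold potential scaleBound
    rw [if_pos (by omega), if_pos (by omega), if_pos (by omega), e1, e2, e3]
    by_cases hl : l < 24
    · rw [Finset.sum_eq_sum_Ico_succ_bot hl]
      push_cast
      apply le_of_eq
      ring
    · rw [Finset.Ico_eq_empty (by omega), Finset.Ico_eq_empty (by omega)]
      push_cast
      simp only [Finset.sum_empty, sub_self]
      have : (0 : ℝ) ≤ l := by positivity
      refine mul_nonneg (by positivity) ?_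
      linarith
  · have hbig : (21 : ℝ) ≤ ∑ l ∈ Finset.range 24, 0.69 * (l : ℝ) * g⁻¹ ^ (l + 2) := by
      calc (21 : ℝ) ≤ ∑ l ∈ Finset.range 24, 0.69 * (l : ℝ) * 0.87 ^ (l + 2) := by
            norm_num [Finset.sum_range_succ]
        _ ≤ _ := by gcongr
    -- the accumulated gain, at least `21`, exceeds the near losses `5.72 * (g⁻¹ + 1 + g)` plus
    -- the tail `5.5 * g / 2`
    norm_num [potential, scaleBound] at hbig ⊢
    linarith
  · norm_num [potential, scaleBound]
  · norm_num [potential, scaleBound]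
    linarith
  · unfold potential scaleBound
    rw [if_neg (by omega), if_neg (by omega), if_neg (by omega), if_neg (by omega),
      if_neg (by omega), if_neg (by omega), if_neg (by omega), if_neg (by omega)]
    have e : (g / 2) ^ d = g ^ d * (1 / 2) ^ d := by rw [← mul_zpow]; ring_nf
    rw [zpow_sub_one₀ (by positivity), e, inv_div]
    have hp : 0 < g ^ d * (1 / 2 : ℝ) ^ d := by positivity
    have : 1.74 ≤ 2 / g := by
      rw [le_div_iff₀ hg]
      linarith
    nlinarith

/-- The weighted sum over the scales is bounded below uniformly in the scale `m` of the root and in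
the number of scales, by telescoping `potential_step`. -/
lemma sum_scaleBound {g : ℝ} (h1 : 1.148 < g) (h2 : g < 1.149) (h5 : g ^ 5 = 2) (m : ℤ) (M : ℕ) :
    -896 ≤ ∑ j ∈ Finset.range M, g ^ j * scaleBound (j - m) := by
  have hg : 0 < g := by linarith
  have tele : ∀ M : ℕ, g ^ m * (potential g (M - 1 - m) - potential g (-1 - m)) ≤
      ∑ j ∈ Finset.range M, g ^ j * scaleBound (j - m) := by
    intro M
    induction M with
    | zero => simp
    | succ M ih =>
      rw [Finset.sum_range_succ]
      have hs := potential_step h1 h2 (M - m)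
      have he : g ^ M = g ^ m * g ^ ((M : ℤ) - m) := by
        rw [← zpow_add₀ hg.ne', ← zpow_natCast]
        congr 1
        ring
      have hm : 0 < g ^ m := by positivity
      have := mul_le_mul_of_nonneg_left hs hm.le
      rw [he]
      rw [show ((M + 1 : ℕ) : ℤ) - 1 - m = M - m by push_cast; ring]
      rw [show (M : ℤ) - m - 1 = M - 1 - m by ring] at this
      linarith
  refine le_trans ?_ (tele M)
  have hm : 0 < g ^ m := by positivity
  have hn := mul_nonneg hm.le (potential_nonneg h1 (M - 1 - m))
  -- For `m ≤ 24` the lost potential is at most `28 * g^25 = 896`; for larger `m` the telescoping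
  -- starts where the potential vanishes.
  rcases le_or_gt m 24 with h | h
  · have a1 : g ^ m ≤ 32 := by
      calc g ^ m ≤ g ^ (25 : ℤ) := zpow_le_zpow_right₀ (by linarith) (by omega)
        _ = (g ^ 5) ^ 5 := by norm_cast; ring
        _ = 32 := by rw [h5]; norm_num
    have := mul_le_mul a1 (potential_le h1 h2 (-1 - m)) (potential_nonneg h1 _) (by norm_num)
    linarith
  · rw [potential_eq_zero g (-1 - m) (by omega)]
    linarith

/-! ### The bound for separated points of one scale -/

/-- `scaleBound` does bound the average of `log |1 - x_i / R|` from below, for any separated points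
`x_i` of the `j`-th scale that stay `η / k` away from `R`. -/
lemma scale_ge (L k j : ℕ) (m : ℤ) (hL : 1 ≤ L) (hk : 1 ≤ k) (x : ℕ → ℝ) (η R : ℝ)
    (hR1 : (1 / 2 : ℝ) ^ (m + 1) < R) (hR2 : R ≤ (1 / 2 : ℝ) ^ m) (hη : 0 < η)
    (hx : ∀ i < L, x i ∈ Set.Icc ((1 / 2 : ℝ) ^ (j + 1)) ((1 / 2 : ℝ) ^ j))
    (hsep : ∀ i < L, ∀ i' < L,
      |(i : ℝ) - i'| * ((1 / 2 : ℝ) ^ (j + 1) / (2 * L)) ≤ |x i - x i'|)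
    (havoid : ∀ i < L, η / k ≤ |x i - R|)
    (hlη : Real.log (1 / η) ≤ L) (hlk : Real.log (2 * k) ≤ L / 4) :
    scaleBound (j - m) * L ≤ ∑ i ∈ Finset.range L, Real.log |1 - x i / R| := by
  have hR : 0 < R := lt_trans (by positivity) hR1
  have hpt : ∀ b : ℝ, (∀ i < L, b ≤ Real.log |1 - x i / R|) →
      b * L ≤ ∑ i ∈ Finset.range L, Real.log |1 - x i / R| := by
    intro b hb
    have := Finset.card_nsmul_le_sum (Finset.range L) (fun i => Real.log |1 - x i / R|) b
      fun i hi => hb i (Finset.mem_range.1 hi)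
    rw [Finset.card_range, nsmul_eq_mul] at this
    linarith
  obtain ⟨d, hd⟩ : ∃ d : ℤ, d = j - m := ⟨_, rfl⟩
  rw [← hd]
  unfold scaleBound
  split_ifs with c1 c2
  · apply hpt
    intro i hi
    obtain ⟨l, rfl⟩ : ∃ l : ℕ, d = -2 - l := ⟨(-2 - d).toNat, by omega⟩
    have hx1 := (hx i hi).1
    have e : (1 / 2 : ℝ) ^ (j + 1) = 2 ^ (l + 1) * (1 / 2 : ℝ) ^ m := by
      rw [show m = ((j + 1 : ℕ) : ℤ) + ((l + 1 : ℕ) : ℤ) by push_cast; omega,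
        zpow_add₀ (by norm_num), zpow_natCast, zpow_natCast, mul_comm, mul_assoc, ← mul_pow]
      norm_num
    have h2 : (2 : ℝ) ^ (l + 1) ≤ x i / R := by
      rw [le_div_iff₀ hR]
      calc (2 : ℝ) ^ (l + 1) * R ≤ 2 ^ (l + 1) * (1 / 2 : ℝ) ^ m := by gcongr
        _ ≤ x i := by rw [← e]; exact hx1
    have h3 : (1 : ℝ) ≤ 2 ^ l := one_le_pow₀ (by norm_num)
    have h4 : (2 : ℝ) ^ l ≤ |1 - x i / R| := by
      rw [pow_succ] at h2
      rw [abs_sub_comm]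
      exact le_trans (by linarith) (le_abs_self _)
    have h5 := Real.log_le_log (by positivity) h4
    rw [Real.log_pow] at h5
    have := Real.log_two_gt_d9
    push_cast
    have hl0 : (0 : ℝ) ≤ l := by positivity
    nlinarith
  · have hs4 : R ≤ 4 * (1 / 2 : ℝ) ^ (j + 1) := by
      refine hR2.trans ?_
      calc (1 / 2 : ℝ) ^ m ≤ (1 / 2 : ℝ) ^ ((j : ℤ) - 1) :=
            zpow_le_zpow_right_of_le_one₀ (by norm_num) (by norm_num) (by omega)
        _ = 4 * (1 / 2 : ℝ) ^ (j + 1) := by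
            rw [zpow_sub₀ (by norm_num), zpow_natCast, pow_succ]
            norm_num
            ring
    have hs2 : (1 / 2 : ℝ) ^ (j + 1) ≤ 1 / 2 := by
      rw [pow_succ]
      have : (1 / 2 : ℝ) ^ j ≤ 1 := pow_le_one₀ (by norm_num) (by norm_num)
      linarith
    exact near_scale L k hL hk x _ η R hR (by positivity) hs4 (by linarith) hη hsep havoid hlη hlk
  · apply hpt
    intro i hi
    have hx1 := (hx i hi).1
    have hx2 := (hx i hi).2
    have e : (1 / 2 : ℝ) ^ j = 2 * (1 / 2 : ℝ) ^ d * (1 / 2 : ℝ) ^ (m + 1) := by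
      rw [mul_assoc, ← zpow_add₀ (by norm_num),
        show d + (m + 1) = (j : ℤ) + 1 by omega, zpow_add₀ (by norm_num), zpow_natCast]
      norm_num
      ring
    have ht : x i / R ≤ 2 * (1 / 2 : ℝ) ^ d := by
      rw [div_le_iff₀ hR]
      calc x i ≤ (1 / 2 : ℝ) ^ j := hx2
        _ = _ := e
        _ ≤ _ := by gcongr
    have hd4 : (1 / 2 : ℝ) ^ d ≤ 1 / 4 := by
      calc (1 / 2 : ℝ) ^ d ≤ (1 / 2 : ℝ) ^ (2 : ℤ) :=
            zpow_le_zpow_right_of_le_one₀ (by norm_num) (by norm_num) (by omega)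
        _ = 1 / 4 := by norm_num
    have ht0 : 0 ≤ x i / R := div_nonneg (le_trans (by positivity) hx1) hR.le
    set t := x i / R
    have hpos : 0 < 1 - t := by linarith
    have hlog := Real.one_sub_inv_le_log_of_pos hpos
    rw [abs_of_pos hpos]
    have hinv : (1 - t)⁻¹ ≤ 1 + 2 * t := by
      rw [inv_le_iff_one_le_mul₀ hpos]
      nlinarith
    linarith

/-! ### The grid -/

/-- The `i`-th of `L` equispaced points of the scale `[2^(-j-1), 2^(-j)]`. They are the midpoints
of a division into `L` equal parts, so that their `η`-neighbourhoods stay inside the scale. -/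
noncomputable def gridPoint (L j i : ℕ) : ℝ := (1 / 2 : ℝ) ^ (j + 1) * (1 + (i + 1 / 2) / L)

lemma gridPoint_mem (L j i : ℕ) (η : ℝ) (hi : i < L)
    (hη : 4 * η * L ≤ (1 / 2 : ℝ) ^ (j + 1)) (x : ℝ)
    (hx : x ∈ Set.Icc (gridPoint L j i - η) (gridPoint L j i + η)) :
    x ∈ Set.Icc ((1 / 2 : ℝ) ^ (j + 1)) ((1 / 2 : ℝ) ^ j) := by
  have hL : (0 : ℝ) < L := by exact_mod_cast (by omega : 0 < L)
  unfold gridPoint at hx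
  have hp : (1 / 2 : ℝ) ^ j = 2 * (1 / 2 : ℝ) ^ (j + 1) := by rw [pow_succ]; ring
  rw [hp]
  set s := (1 / 2 : ℝ) ^ (j + 1) with hs
  have hs0 : 0 < s := by positivity
  have hη' : η ≤ s / L / 4 := by
    rw [div_div, le_div_iff₀ (by positivity)]
    linarith
  have hi1 : (i : ℝ) + 1 ≤ L := by exact_mod_cast hi
  have e : s * (1 + (i + 1 / 2) / L) = s + s / L * (i + 1 / 2) := by field_simp
  rw [e] at hx
  have hh : 0 < s / L := by positivity
  have hhL : s / L * L = s := by field_simp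
  obtain ⟨a, b⟩ := hx
  have hi0 : (0 : ℝ) ≤ i := by positivity
  constructor
  · nlinarith
  · nlinarith

lemma gridPoint_sep (L j : ℕ) (η : ℝ)
    (hη : 4 * η * L ≤ (1 / 2 : ℝ) ^ (j + 1)) (x : ℕ → ℝ)
    (hx : ∀ i < L, x i ∈ Set.Icc (gridPoint L j i - η) (gridPoint L j i + η)) :
    ∀ i < L, ∀ i' < L,
      |(i : ℝ) - i'| * ((1 / 2 : ℝ) ^ (j + 1) / (2 * L)) ≤ |x i - x i'| := by
  intro i hi i' hi'
  have hL : (0 : ℝ) < L := by exact_mod_cast (by omega : 0 < L)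
  rcases eq_or_ne i i' with rfl | hne
  · simp
  have h1 := hx i hi
  have h2 := hx i' hi'
  unfold gridPoint at h1 h2
  set s := (1 / 2 : ℝ) ^ (j + 1) with hs
  have hs0 : 0 < s := by positivity
  have e : ∀ i : ℕ, s * (1 + (i + 1 / 2) / L) = s + s / L * (i + 1 / 2) := by
    intro i; field_simp
  have e2 : s / (2 * L) = s / L / 2 := by field_simp
  have hη' : η ≤ s / L / 4 := by
    rw [div_div, le_div_iff₀ (by positivity)]
    linarith
  rw [e] at h1 h2
  rw [e2]
  have hh : 0 < s / L := by positivity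
  have hd : (1 : ℝ) ≤ |(i : ℝ) - i'| := by
    have : (1 : ℤ) ≤ |(i : ℤ) - i'| := Int.one_le_abs (by omega)
    exact_mod_cast this
  have h3 : |s / L * ((i : ℝ) - i')| ≤ |x i - x i'| + 2 * η := by
    have hab : s / L * ((i : ℝ) - i') = (x i - x i') +
      ((s + s / L * (i + 1 / 2) - x i) - (s + s / L * (i' + 1 / 2) - x i')) := by ring
    rw [hab]
    refine (abs_add_le _ _).trans ?_
    gcongr
    rw [abs_le]
    obtain ⟨a, b⟩ := h1
    obtain ⟨c, d⟩ := h2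
    constructor <;> linarith
  rw [abs_mul, abs_of_pos hh] at h3
  nlinarith

/-- The neighbourhoods of radius `η` are small compared with the grid spacing: this is where
`η ≤ 1 / (20 κ²)` is used. With `v = η^(-1/4)` one has `log (1 / η) ≤ 4 (v - 1)` and
`4 κ ≤ v²`. -/
lemma eta_bound (κ η : ℝ) (hκ : 2 ≤ κ) (hη : 0 < η) (hη2 : η ≤ 1 / (20 * κ ^ 2)) (L : ℝ)
    (hL : L ≤ Real.log (1 / η) + 1) : 4 * η * L ≤ 1 / κ := by
  set v := Real.sqrt (Real.sqrt (1 / η)) with hv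
  have hv4 : v ^ 4 = 1 / η := by
    rw [show v ^ 4 = (v ^ 2) ^ 2 by ring, hv, Real.sq_sqrt (by positivity),
      Real.sq_sqrt (by positivity)]
  have hv0 : 0 < v := by positivity
  have hlog : Real.log (1 / η) ≤ 4 * (v - 1) := by
    rw [← hv4, Real.log_pow]
    have := Real.log_le_sub_one_of_pos hv0
    push_cast
    linarith
  have hY : 20 * κ ^ 2 ≤ v ^ 4 := by
    rw [hv4]
    rw [le_div_iff₀ (by positivity)] at hη2
    rw [le_div_iff₀ hη]
    linarith
  have hv2 : 4 * κ ≤ v ^ 2 := by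
    by_contra! h
    nlinarith [sq_nonneg v]
  have hLv : L ≤ 4 * v - 3 := by linarith
  have hηv : η = 1 / v ^ 4 := by rw [hv4]; field_simp
  rw [hηv, show 4 * (1 / v ^ 4) * L = 4 * L / v ^ 4 by ring,
    div_le_div_iff₀ (by positivity) (by positivity)]
  have hv28 : 2.8 ≤ v := by
    by_contra! h
    nlinarith
  have : 4 * κ * L ≤ v ^ 2 * (4 * v - 3) := by
    by_cases h : 0 ≤ L
    · gcongr
    · nlinarith [mul_pos hv0 hv0]
  nlinarith [mul_pos hv0 hv0, sq_nonneg (v - 2)]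

/-- The degree bound makes `(2k)⁴ ≤ 20 κ² ≤ 1 / η`, so dividing the avoided distance by `k` is
cheap compared with `ln (1 / η)`. -/
lemma log_two_mul_le (κ η : ℝ) (k : ℕ) (L : ℝ) (hk : 1 ≤ k) (hκ : 2 ≤ κ) (hη : 0 < η)
    (hη2 : η ≤ 1 / (20 * κ ^ 2)) (hkκ : (k : ℝ) ≤ κ ^ (1 / 5 : ℝ) / 377)
    (hL : Real.log (1 / η) ≤ L) : Real.log (2 * k) ≤ L / 4 := by
  have hk0 : (1 : ℝ) ≤ k := by exact_mod_cast hk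
  have h1 : κ ^ (1 / 5 : ℝ) ≤ κ ^ (1 / 2 : ℝ) :=
    Real.rpow_le_rpow_of_exponent_le (by linarith) (by norm_num)
  rw [← Real.sqrt_eq_rpow] at h1
  have h2 : (k : ℝ) ≤ Real.sqrt κ := by
    have : 0 ≤ Real.sqrt κ := Real.sqrt_nonneg _
    linarith
  have h3 : (k : ℝ) ^ 2 ≤ κ := by
    have := pow_le_pow_left₀ (by positivity) h2 2
    rwa [Real.sq_sqrt (by linarith)] at this
  have h4 : (2 * (k : ℝ)) ^ 4 ≤ 1 / η := by
    rw [le_div_iff₀ (by positivity)] at hη2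
    rw [le_div_iff₀ hη]
    have h5 : (2 * (k : ℝ)) ^ 4 ≤ 20 * κ ^ 2 := by
      have := pow_le_pow_left₀ (by positivity) h3 2
      nlinarith
    have := mul_le_mul_of_nonneg_right h5 hη.le
    linarith
  have h5 := Real.log_le_log (by positivity) h4
  rw [Real.log_pow] at h5
  push_cast at h5
  linarith

/-! ### The lower bound -/

/-- The case of positive degree: if `|p| < 1 / 3` near every grid point, then averaging `log |p|`
gives `(∑ g^j) log 3 ≤ 896 k`, while `g^(M+1) ≥ κ^(1/5) ≥ 377 k` and `∑ g^j` is a geometric sum. -/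
lemma exists_large_value (κ η : ℝ) (hκ : 2 ≤ κ) (hη : 0 < η) (hη2 : η ≤ 1 / (20 * κ ^ 2))
    (M L : ℕ) (hL1 : 1 ≤ L) (hM : (2 : ℝ) ^ M ≤ κ) (hM' : κ < (2 : ℝ) ^ (M + 1))
    (hL : Real.log (1 / η) ≤ L) (hL' : (L : ℝ) ≤ Real.log (1 / η) + 1)
    (p : Polynomial ℝ) (hdeg : (p.natDegree : ℝ) ≤ κ ^ (1 / 5 : ℝ) / 377) (hp : p.eval 0 = 1)
    (hk : 1 ≤ p.natDegree) :
    ∃ j < M, ∃ i < L, ∃ x ∈ Set.Icc (gridPoint L j i - η) (gridPoint L j i + η),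
      1 / 3 ≤ |p.eval x| := by
  by_contra! H
  obtain ⟨S, hcard, hpos, hprod⟩ := exists_root_moduli_s8 p hp
  set k := p.natDegree with hkdef
  have hk0 : (1 : ℝ) ≤ k := by exact_mod_cast hk
  have hL0 : (0 : ℝ) < L := by exact_mod_cast hL1
  have hScard : S.toFinset.card ≤ k := by
    rw [← hcard]
    exact Multiset.toFinset_card_le S
  choose x hxmem hxav using fun j i =>
    exists_avoiding_point S.toFinset k hk hScard (gridPoint L j i) η hη
  have hηj : ∀ j < M, 4 * η * L ≤ (1 / 2 : ℝ) ^ (j + 1) := by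
    intro j hj
    refine (eta_bound κ η hκ hη hη2 L hL').trans ?_
    calc 1 / κ ≤ 1 / 2 ^ M := by gcongr
      _ = (1 / 2 : ℝ) ^ M := by rw [_root_.one_div_pow]
      _ ≤ _ := pow_le_pow_of_le_one (by norm_num) (by norm_num) (by omega)
  have hlk := log_two_mul_le κ η k L hk hκ hη hη2 hdeg hL
  set g : ℝ := (2 : ℝ) ^ (1 / 5 : ℝ) with hgdef
  have hg0 : 0 < g := by positivity
  have hg5 : g ^ 5 = 2 := by
    rw [hgdef, ← Real.rpow_natCast, ← Real.rpow_mul (by norm_num)]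
    norm_num
  have hg1 : 1.148 < g := by
    apply lt_of_pow_lt_pow_left₀ 5 hg0.le
    rw [hg5]
    norm_num
  have hg2 : g < 1.149 := by
    apply lt_of_pow_lt_pow_left₀ 5 (by norm_num)
    rw [hg5]
    norm_num
  have hne : ∀ j i, ∀ R ∈ S, 1 - x j i / R ≠ 0 := by
    intro j i R hR h
    have h1 := hxav j i R (Multiset.mem_toFinset.2 hR)
    have hR0 := hpos R hR
    have : x j i = R := by
      field_simp at h
      linarith
    rw [this, sub_self, abs_zero] at h1
    have : 0 < η / k := by positivity
    linarith
  have hroot : ∀ R ∈ S, -896 * L ≤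
      ∑ j ∈ Finset.range M, g ^ j * ∑ i ∈ Finset.range L, Real.log |1 - x j i / R| := by
    intro R hR
    obtain ⟨n, hn1, hn2⟩ := exists_mem_Ioc_zpow (hpos R hR) (one_lt_two : (1 : ℝ) < 2)
    have hconv : ∀ n : ℤ, (2 : ℝ) ^ n = (1 / 2 : ℝ) ^ (-n) := by
      intro n
      rw [one_div, _root_.inv_zpow, _root_.zpow_neg, inv_inv]
    rw [hconv] at hn1 hn2
    obtain ⟨m, hm⟩ : ∃ m : ℤ, m = -(n + 1) := ⟨_, rfl⟩
    rw [← hm] at hn2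
    rw [show -n = m + 1 by omega] at hn1
    have h1 := sum_scaleBound hg1 hg2 hg5 m M
    have h2 := mul_le_mul_of_nonneg_right h1 hL0.le
    refine h2.trans ?_
    rw [Finset.sum_mul]
    refine Finset.sum_le_sum fun j hj => ?_
    have hj' := hηj j (Finset.mem_range.1 hj)
    rw [mul_assoc]
    refine mul_le_mul_of_nonneg_left ?_ (by positivity)
    exact scale_ge L k j m hL1 hk (x j) η R hn1 hn2 hη
      (fun i hi => gridPoint_mem L j i η hi hj' _ (hxmem j i))
      (gridPoint_sep L j η hj' (x j) fun i _ => hxmem j i)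
      (fun i _ => hxav j i R (Multiset.mem_toFinset.2 hR)) hL hlk
  have hlogp : ∀ j < M, ∀ i < L,
      (S.map fun R => Real.log |1 - x j i / R|).sum ≤ -Real.log 3 := by
    intro j hj i hi
    have h1 := H j hj i hi (x j i) (hxmem j i)
    have hx0 : 0 ≤ x j i :=
      le_trans (by positivity) (gridPoint_mem L j i η hi (hηj j hj) _ (hxmem j i)).1
    have h2 := (hprod (x j i) hx0).trans h1.le
    have h3 : 0 < (S.map fun R => |1 - x j i / R|).prod := by
      apply Multiset.prod_pos
      intro y hy
      obtain ⟨R, hR, rfl⟩ := Multiset.mem_map.1 hy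
      exact abs_pos.2 (hne j i R hR)
    have h4 := Real.log_le_log h3 h2
    rw [Real.log_multiset_prod] at h4
    · rw [Multiset.map_map, one_div, Real.log_inv] at h4
      exact h4
    · intro y hy
      obtain ⟨R, hR, rfl⟩ := Multiset.mem_map.1 hy
      exact abs_ne_zero.2 (hne j i R hR)
  have hswap : (S.map fun R => ∑ j ∈ Finset.range M,
      g ^ j * ∑ i ∈ Finset.range L, Real.log |1 - x j i / R|).sum =
      ∑ j ∈ Finset.range M, g ^ j * ∑ i ∈ Finset.range L,
        (S.map fun R => Real.log |1 - x j i / R|).sum := by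
    clear_value k
    clear hroot hlogp hne hxav hprod hpos hcard hScard
    induction S using Multiset.induction_on with
    | empty => simp
    | cons R S ih =>
      simp only [Multiset.map_cons, Multiset.sum_cons, ih, Finset.sum_add_distrib, mul_add]
  have hlow : (k : ℝ) * (-896 * L) ≤ (S.map fun R => ∑ j ∈ Finset.range M,
      g ^ j * ∑ i ∈ Finset.range L, Real.log |1 - x j i / R|).sum := by
    rw [← hcard, ← nsmul_eq_mul, ← Multiset.sum_replicate, ← Multiset.map_const']
    exact Multiset.sum_map_le_sum_map _ _ hroot
  have hup : ∑ j ∈ Finset.range M, g ^ j * ∑ i ∈ Finset.range L,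
        (S.map fun R => Real.log |1 - x j i / R|).sum ≤
      ∑ j ∈ Finset.range M, g ^ j * (L * -Real.log 3) := by
    refine Finset.sum_le_sum fun j hj => mul_le_mul_of_nonneg_left ?_ (by positivity)
    have := Finset.sum_le_card_nsmul (Finset.range L) _ _
      fun i hi => hlogp j (Finset.mem_range.1 hj) i (Finset.mem_range.1 hi)
    rwa [Finset.card_range, nsmul_eq_mul] at this
  rw [hswap] at hlow
  have hmain := hlow.trans hup
  rw [← Finset.sum_mul] at hmain
  have hgeom := geom_sum_mul g M
  set G := ∑ j ∈ Finset.range M, g ^ j with hG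
  have hκg : κ ^ (1 / 5 : ℝ) ≤ g * g ^ M := by
    calc κ ^ (1 / 5 : ℝ) ≤ ((2 : ℝ) ^ (M + 1)) ^ (1 / 5 : ℝ) := by gcongr
      _ = g * g ^ M := by
        rw [← pow_succ', hgdef, ← Real.rpow_natCast, ← Real.rpow_natCast,
          ← Real.rpow_mul (by norm_num), ← Real.rpow_mul (by norm_num), mul_comm]
  have hlog3 : 1 ≤ Real.log 3 := by
    rw [Real.le_log_iff_exp_le (by norm_num)]
    linarith [Real.exp_one_lt_d9]
  have h6 : G * Real.log 3 ≤ k * 896 := by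
    have : (G * Real.log 3) * L ≤ (k * 896) * L := by linarith
    exact le_of_mul_le_mul_right this hL0
  have hG0 : 0 ≤ G := Finset.sum_nonneg fun _ _ => by positivity
  have h7 : G ≤ k * 896 := by nlinarith
  have h8 : 377 * (k : ℝ) ≤ g * g ^ M := by linarith
  have h9 : g ^ M ≤ G * 0.149 + 1 := by nlinarith
  nlinarith

/-- Lower bound against stable approximating polynomials (scalar form): there is a
constant `c ∈ [1/5, 1/2]` such that for any `κ ≥ 2`, `0 < η ≤ 1/(20κ²)` and
`n ≥ ⌊log₂ κ⌋·⌈ln(1/η)⌉`, there are `λ₁, …, λₙ ∈ [1/κ, 1]` such that every polynomial `p` with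
degree at most `κ^c/377` and `p(0) = 1` has `|p(x)| ≥ 1/3` at some point `x` within distance
`η` of some `λᵢ`. -/
theorem hard_eigenvalue_instance_lower_bound :
    ∃ c : ℝ, 1 / 5 ≤ c ∧ c ≤ 1 / 2 ∧
      ∀ κ : ℝ, 2 ≤ κ → ∀ η : ℝ, 0 < η → η ≤ 1 / (20 * κ ^ 2) →
        ∀ n : ℕ, ⌊Real.logb 2 κ⌋ * ⌈Real.log (1 / η)⌉ ≤ (n : ℤ) →
          ∃ lam : Fin n → ℝ, (∀ i, lam i ∈ Set.Icc (1 / κ) 1) ∧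
            ∀ p : Polynomial ℝ, (p.natDegree : ℝ) ≤ κ ^ c / 377 → p.eval 0 = 1 →
              ∃ x ∈ ⋃ i, Set.Icc (lam i - η) (lam i + η), 1 / 3 ≤ |p.eval x| := by
  refine ⟨1 / 5, le_rfl, by norm_num, ?_⟩
  intro κ hκ η hη hη2 n hn
  have hκ0 : 0 < κ := by linarith
  have hlog1 : 1 ≤ Real.logb 2 κ := by
    rw [Real.le_logb_iff_rpow_le (by norm_num) hκ0]
    simpa using hκ
  have hηinv : 1 < 1 / η := by
    rw [lt_div_iff₀ hη]
    have : 1 / (20 * κ ^ 2) < 1 := by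
      rw [div_lt_one (by positivity)]
      nlinarith
    linarith
  have hlogη : 0 < Real.log (1 / η) := Real.log_pos hηinv
  have hM1 : 1 ≤ ⌊Real.logb 2 κ⌋ := Int.le_floor.2 (by exact_mod_cast hlog1)
  have hL1 : 0 < ⌈Real.log (1 / η)⌉ := Int.ceil_pos.2 hlogη
  obtain ⟨M, hM⟩ : ∃ M : ℕ, ⌊Real.logb 2 κ⌋ = M := ⟨_, (Int.toNat_of_nonneg (by omega)).symm⟩
  obtain ⟨L, hL⟩ : ∃ L : ℕ, ⌈Real.log (1 / η)⌉ = L := ⟨_, (Int.toNat_of_nonneg (by omega)).symm⟩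
  rw [hM, hL] at hn
  have hn' : M * L ≤ n := by exact_mod_cast hn
  have hMpos : 1 ≤ M := by omega
  have hLpos : 1 ≤ L := by omega
  have h2M : (2 : ℝ) ^ M ≤ κ := by
    have h := Int.floor_le (Real.logb 2 κ)
    rw [hM, Real.le_logb_iff_rpow_le (by norm_num) hκ0] at h
    exact_mod_cast h
  have h2M' : κ < (2 : ℝ) ^ (M + 1) := by
    have h := Int.lt_floor_add_one (Real.logb 2 κ)
    rw [hM, Real.logb_lt_iff_lt_rpow (by norm_num) hκ0] at h
    exact_mod_cast h
  have hLle : Real.log (1 / η) ≤ L := by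
    have h := Int.le_ceil (Real.log (1 / η))
    rw [hL] at h
    exact_mod_cast h
  have hLge : (L : ℝ) ≤ Real.log (1 / η) + 1 := by
    have h := (Int.ceil_lt_add_one (Real.log (1 / η))).le
    rw [hL] at h
    exact_mod_cast h
  -- The grid points are enumerated by `t = j * L + i`; surplus indices get the value `1`.
  refine ⟨fun t => if (t : ℕ) < M * L then gridPoint L (t / L) (t % L) else 1, ?_, ?_⟩
  · intro t
    dsimp only
    split_ifs with ht
    · have hj : (t : ℕ) / L < M := by
        rw [Nat.div_lt_iff_lt_mul (by omega)]
        exact ht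
      have h1 := gridPoint_mem L (t / L) (t % L) 0 (Nat.mod_lt _ (by omega))
        (by simp only [mul_zero, zero_mul]; positivity) (gridPoint L (t / L) (t % L)) (by simp)
      refine ⟨le_trans ?_ h1.1, h1.2.trans (pow_le_one₀ (by norm_num) (by norm_num))⟩
      calc 1 / κ ≤ 1 / 2 ^ M := by gcongr
        _ = (1 / 2 : ℝ) ^ M := by rw [_root_.one_div_pow]
        _ ≤ _ := pow_le_pow_of_le_one (by norm_num) (by norm_num) (by omega)
    · refine ⟨?_, le_rfl⟩
      rw [div_le_one hκ0]
      linarith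
  · intro p hdeg hp
    rcases Nat.eq_zero_or_pos p.natDegree with h0 | hk
    · have hnpos : 0 < n := lt_of_lt_of_le (Nat.mul_pos hMpos hLpos) hn'
      rw [Polynomial.eq_C_of_natDegree_eq_zero h0] at hp ⊢
      rw [Polynomial.eval_C] at hp
      refine ⟨_, Set.mem_iUnion.2 ⟨⟨0, hnpos⟩, ⟨sub_le_self _ hη.le, le_add_of_nonneg_right hη.le⟩⟩,
        ?_⟩
      rw [Polynomial.eval_C, hp]
      norm_num
    · obtain ⟨j, hj, i, hi, x, hx, hpx⟩ := exists_large_value κ η hκ hη hη2 M L hLpos h2M h2M' hLle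
        hLge p hdeg hp hk
      have hlt : j * L + i < M * L := by nlinarith
      refine ⟨x, Set.mem_iUnion.2 ⟨⟨j * L + i, by omega⟩, ?_⟩, hpx⟩
      have e1 : (j * L + i) / L = j := by
        rw [mul_comm, Nat.mul_add_div (by omega), Nat.div_eq_of_lt hi, add_zero]
      have e2 : (j * L + i) % L = i := by
        rw [mul_comm, Nat.mul_add_mod, Nat.mod_eq_of_lt hi]
      simpa only [hlt, if_true, e1, e2] using hx
end
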